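/- Define, for f : (−1,1) → ℂ, T₁f(x) := ∑_{j∈ℤ, j≠0} (1/(2j+x)²)·f(−1/(2j+x)), and, for f : (0,1) → ℂ, S₁f(x) := ∑_{j=1}^∞ (1/(j+x)²)·f(1/(j+x)). Then: (a) for every f ∈ L¹((−1,1), ℂ) the series defining T₁f(x) converges absolutely for almost every x ∈ (−1,1), T₁f ∈ L¹((−1,1)) with ∫_{−1}^1 |T₁f| ≤ ∫_{−1}^1 |f|, and if ∫_{−1}^1 f(t) dt = 0 then ∫_{−1}^1 |T₁ⁿ f| → 0 as n → ∞; (b) for every f ∈ L¹((0,1), ℂ) with ∫₀^1 f(t) dt = 0, one has ∫₀^1 |S₁ⁿ f| → 0 as n → ∞. -/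

import Mathlib

open MeasureTheory Filter

/-- The transfer operator `T₁` of the Gauss-type map `τ₁(x) = {-1/x} mod 2ℤ`. -/
noncomputable def T1op (f : ℝ → ℂ) (x : ℝ) : ℂ :=
  ∑' j : {j : ℤ // j ≠ 0},
    ((1 / (2 * ((j : ℤ) : ℝ) + x) ^ 2 : ℝ) : ℂ) * f (-1 / (2 * ((j : ℤ) : ℝ) + x))

/-- The transfer operator `S₁` of the classical Gauss map `σ₁(x) = {1/x} mod 1`
(summation over `j ≥ 1`, written as `j + 1` with `j : ℕ`). -/
noncomputable def S1op (f : ℝ → ℂ) (x : ℝ) : ℂ :=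
  ∑' j : ℕ, ((1 / (((j : ℝ) + 1) + x) ^ 2 : ℝ) : ℂ) * f (1 / (((j : ℝ) + 1) + x))

open Topology

/-!
Both maps are given by inverse branches `x ↦ ± 1 / (n j + x)`, which act projectively on the
densities `1 / (w x + 1)²`. Iterates of the branches contract, so every nonnegative `L¹` function
is asymptotically absorbed by the cone spanned by these densities, and only that cone matters for
`lim ‖Tᵐ f‖`.

For the Gauss map the normalised densities share a positive lower bound, which is lost in each
cancellation between the positive and the negative part of `f`.

For the even map this fails as `w → ± 1`, because of the neutral fixed points `± 1`. There the
densities `K w` satisfy `K w ≤ 9 T (K w)`, which forces `lim ‖Tᵐ (f - T f)‖ = 0`. Hence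
`G w = lim ‖Tᵐ (K w - K 0)‖` is subharmonic for the Markov chain
`w ↦ 1 / (2 j - w)`, and it tends to `0` as `w → 0`. The slow escape `1 - 1 / t ↦ 1 - 1 / (t + 1)`
along the parabolic branch visits a neighbourhood of `0` with a total probability bounded below, so
the maximum principle gives `G = 0`.
-/

/-- A Kakutani *AL-space*: a normed lattice whose norm is additive on the positive cone. The model
case is a real `L¹` space. -/
class AbstractLSpace (E : Type*) [NormedAddCommGroup E] [Lattice E] : Prop where
  norm_add_of_nonneg : ∀ {x y : E}, 0 ≤ x → 0 ≤ y → ‖x + y‖ = ‖x‖ + ‖y‖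

instance {α : Type*} [MeasurableSpace α] {μ : Measure α} : AbstractLSpace (Lp ℝ 1 μ) where
  norm_add_of_nonneg {f g} hf hg := by
    rw [L1.norm_eq_integral_norm, L1.norm_eq_integral_norm, L1.norm_eq_integral_norm,
      ← integral_add (L1.integrable_coeFn f).norm (L1.integrable_coeFn g).norm]
    refine integral_congr_ae ?_
    filter_upwards [Lp.coeFn_add f g, (Lp.coeFn_nonneg f).2 hf, (Lp.coeFn_nonneg g).2 hg]
      with t hadd hft hgt
    simp only [Pi.zero_apply] at hft hgt
    rw [hadd, Pi.add_apply, Real.norm_of_nonneg hft, Real.norm_of_nonneg hgt,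
      Real.norm_of_nonneg (add_nonneg hft hgt)]

instance {α : Type*} [MeasurableSpace α] {p : ENNReal} {μ : Measure α} :
    PosSMulMono ℝ (Lp ℝ p μ) where
  smul_le_smul_of_nonneg_left r hr f g hfg := by
    rw [← Lp.coeFn_le] at hfg ⊢
    filter_upwards [hfg, Lp.coeFn_smul r f, Lp.coeFn_smul r g] with t ht hf hg
    rw [hf, hg]
    exact mul_le_mul_of_nonneg_left ht hr

section AbstractLSpace

open AbstractLSpace (norm_add_of_nonneg)

variable {E : Type*} [NormedAddCommGroup E] [Lattice E] [IsOrderedAddMonoid E] [AbstractLSpace E]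

theorem norm_sub_of_nonneg_of_le {x y : E} (hx : 0 ≤ x) (hxy : x ≤ y) : ‖y - x‖ = ‖y‖ - ‖x‖ := by
  rw [eq_sub_iff_add_eq, ← norm_add_of_nonneg (sub_nonneg.2 hxy) hx, sub_add_cancel]

theorem norm_sub_le_norm_sub_add_of_le {p p' q q' : E} (hp : 0 ≤ p) (hpp' : p ≤ p')
    (hq : 0 ≤ q) (hqq' : q ≤ q') :
    ‖p' - q'‖ ≤ ‖p - q‖ + (‖p'‖ - ‖p‖) + (‖q'‖ - ‖q‖) := by
  calc ‖p' - q'‖ = ‖p - q + (p' - p) - (q' - q)‖ := by congr 1; abel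
    _ ≤ ‖p - q‖ + ‖p' - p‖ + ‖q' - q‖ :=
      (norm_sub_le _ _).trans (add_le_add_left (norm_add_le _ _) _)
    _ = ‖p - q‖ + (‖p'‖ - ‖p‖) + (‖q'‖ - ‖q‖) := by
      rw [norm_sub_of_nonneg_of_le hp hpp', norm_sub_of_nonneg_of_le hq hqq']

theorem norm_sub_le_of_nonneg_of_le {p q r : E} (hr : 0 ≤ r) (hp : r ≤ p) (hq : r ≤ q) :
    ‖p - q‖ ≤ ‖p‖ + ‖q‖ - 2 * ‖r‖ := by
  have h := norm_sub_le_norm_sub_add_of_le hr hp hr hq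
  rw [sub_self, norm_zero] at h
  linarith

theorem norm_sum_of_nonneg {ι : Type*} {b : ι → E} (hb : ∀ i, 0 ≤ b i) (t : Finset ι) :
    ‖∑ i ∈ t, b i‖ = ∑ i ∈ t, ‖b i‖ := by
  induction t using Finset.cons_induction with
  | empty => simp
  | cons i t hi ih =>
    rw [Finset.sum_cons, Finset.sum_cons,
      norm_add_of_nonneg (hb i) (Finset.sum_nonneg fun k _ => hb k), ih]

theorem hasSum_norm_of_nonneg {ι : Type*} {b : ι → E} {z : E} (h : HasSum b z)
    (hb : ∀ i, 0 ≤ b i) : HasSum (fun i => ‖b i‖) ‖z‖ := by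
  refine h.norm.congr fun t => ?_
  exact norm_sum_of_nonneg hb t

theorem norm_posPart_add_norm_negPart [HasSolidNorm E] (x : E) : ‖x⁺‖ + ‖x⁻‖ = ‖x‖ := by
  rw [← norm_add_of_nonneg (posPart_nonneg x) (negPart_nonneg x), posPart_add_negPart,
    norm_abs_eq_norm]

end AbstractLSpace

theorem le_hasSum_of_subadditive {ι M : Type*} [AddCommMonoid M] [TopologicalSpace M]
    {f : M → ℝ} (hf : Continuous f) (hf0 : f 0 ≤ 0) (hadd : ∀ x y, f (x + y) ≤ f x + f y)
    {b : ι → M} {z : M} (hb : HasSum b z) {c : ι → ℝ} {s : ℝ} (hc : HasSum c s)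
    (hbc : ∀ i, f (b i) ≤ c i) : f z ≤ s := by
  refine le_of_tendsto_of_tendsto' ((hf.tendsto z).comp hb) hc fun t => ?_
  exact (Finset.le_sum_of_subadditive f hf0 hadd t b).trans (Finset.sum_le_sum fun i _ => hbc i)

section AsymptoticSeminorm

variable {E : Type*} [NormedAddCommGroup E] [NormedSpace ℝ E] {T : E →L[ℝ] E}

theorem sum_pow_apply_sub_map (K : ℕ) (f : E) :
    ∑ k ∈ Finset.range K, (T ^ k) (f - T f) = f - (T ^ K) f := by
  simpa only [map_sub, pow_succ, mul_apply_eq_comp, pow_zero, one_apply_eq_self] using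
    Finset.sum_range_sub' (fun k => (T ^ k) f) K

theorem antitone_norm_pow_apply (hT : ‖T‖ ≤ 1) (x : E) : Antitone fun n : ℕ => ‖(T ^ n) x‖ :=
  antitone_nat_of_succ_le fun n => by
    rw [pow_succ', mul_apply_eq_comp]
    exact (T.le_of_opNorm_le hT _).trans_eq (one_mul _)

theorem norm_pow_apply_le (hT : ‖T‖ ≤ 1) (n : ℕ) (x : E) : ‖(T ^ n) x‖ ≤ ‖x‖ :=
  antitone_norm_pow_apply hT x n.zero_le

theorem tendsto_norm_pow_apply_iInf (hT : ‖T‖ ≤ 1) (x : E) :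
    Tendsto (fun n : ℕ => ‖(T ^ n) x‖) atTop (𝓝 (⨅ n : ℕ, ‖(T ^ n) x‖)) :=
  tendsto_atTop_ciInf (antitone_norm_pow_apply hT x)
    ⟨0, Set.forall_mem_range.2 fun _ => norm_nonneg _⟩

/-- The seminorm `x ↦ lim ‖Tⁿ x‖` of a contraction `T`. It vanishes exactly at the vectors whose
orbit tends to zero. -/
noncomputable def asymptoticSeminorm (hT : ‖T‖ ≤ 1) : Seminorm ℝ E :=
  Seminorm.of (fun x => ⨅ n : ℕ, ‖(T ^ n) x‖)
    (fun x y => le_of_tendsto_of_tendsto' (tendsto_norm_pow_apply_iInf hT (x + y))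
      ((tendsto_norm_pow_apply_iInf hT x).add (tendsto_norm_pow_apply_iInf hT y)) fun n => by
        rw [map_add]
        exact norm_add_le _ _)
    fun r x => by
      simp only [map_smul, norm_smul]
      rw [Real.mul_iInf_of_nonneg (norm_nonneg r)]

variable (hT : ‖T‖ ≤ 1)

theorem tendsto_norm_pow_apply (x : E) :
    Tendsto (fun n : ℕ => ‖(T ^ n) x‖) atTop (𝓝 (asymptoticSeminorm hT x)) :=
  tendsto_norm_pow_apply_iInf hT x

theorem asymptoticSeminorm_le_norm_pow_apply (n : ℕ) (x : E) :
    asymptoticSeminorm hT x ≤ ‖(T ^ n) x‖ :=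
  (antitone_norm_pow_apply hT x).le_of_tendsto (tendsto_norm_pow_apply hT x) n

theorem asymptoticSeminorm_le_norm (x : E) : asymptoticSeminorm hT x ≤ ‖x‖ :=
  asymptoticSeminorm_le_norm_pow_apply hT 0 x

theorem asymptoticSeminorm_pow_apply (m : ℕ) (x : E) :
    asymptoticSeminorm hT ((T ^ m) x) = asymptoticSeminorm hT x := by
  refine tendsto_nhds_unique (tendsto_norm_pow_apply hT ((T ^ m) x)) ?_
  simpa only [← mul_apply_eq_comp, ← pow_add] using
    (tendsto_add_atTop_iff_nat m).2 (tendsto_norm_pow_apply hT x)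

theorem continuous_asymptoticSeminorm : Continuous (asymptoticSeminorm hT) :=
  Seminorm.continuous_of_le continuous_norm
    (q := normSeminorm ℝ E) (asymptoticSeminorm_le_norm hT)

end AsymptoticSeminorm

theorem le_of_forall_pos_le_add_mul {a b c : ℝ} (h : ∀ δ, 0 < δ → a ≤ b + c * δ) : a ≤ b := by
  have hlim : Tendsto (fun δ : ℝ => b + c * δ) (𝓝[>] 0) (𝓝 (b + c * 0)) :=
    (continuous_const.add (continuous_const.mul continuous_id)).continuousWithinAt
  rw [mul_zero, add_zero] at hlim
  exact ge_of_tendsto hlim (eventually_mem_nhdsWithin.mono h)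

section Markov

variable {E : Type*} [NormedAddCommGroup E] [Lattice E] [NormedSpace ℝ E]

/-- A positive operator preserving the norm of nonnegative vectors. -/
structure IsMarkovOperator (T : E →L[ℝ] E) : Prop where
  map_nonneg : ∀ {x : E}, 0 ≤ x → 0 ≤ T x
  norm_map : ∀ {x : E}, 0 ≤ x → ‖T x‖ = ‖x‖

/-- The orbits of nonnegative vectors under `T` come arbitrarily close to `C` and stay close. -/
def IsAbsorbing (T : E →L[ℝ] E) (C : Set E) : Prop :=
  ∀ x : E, 0 ≤ x → ∀ δ : ℝ, 0 < δ → ∀ᶠ n : ℕ in atTop, ∃ g ∈ C, ‖(T ^ n) x - g‖ < δ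

namespace IsMarkovOperator

variable {T : E →L[ℝ] E} (hT : IsMarkovOperator T)

include hT

theorem pow (n : ℕ) : IsMarkovOperator (T ^ n) := by
  induction n with
  | zero => exact ⟨fun hx => hx, fun _ => rfl⟩
  | succ n ih =>
    rw [pow_succ']
    exact ⟨fun hx => hT.map_nonneg (ih.map_nonneg hx),
      fun hx => (hT.norm_map (ih.map_nonneg hx)).trans (ih.norm_map hx)⟩

variable [IsOrderedAddMonoid E]

theorem monotone : Monotone T := fun x y hxy => by
  rw [← sub_nonneg, ← map_sub]
  exact hT.map_nonneg (sub_nonneg.2 hxy)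

theorem exists_approx_of_isAbsorbing {C : Set E} (hC : IsAbsorbing T C) (x : E) {δ : ℝ}
    (hδ : 0 < δ) : ∃ m : ℕ, ∃ g ∈ C, ∃ g' ∈ C,
      |‖g‖ - ‖x⁺‖| ≤ δ ∧ |‖g'‖ - ‖x⁻‖| ≤ δ ∧ ‖(T ^ m) x - (g - g')‖ ≤ 2 * δ := by
  obtain ⟨m, ⟨g, hg, hgδ⟩, g', hg', hgδ'⟩ :=
    ((hC x⁺ (posPart_nonneg x) δ hδ).and (hC x⁻ (negPart_nonneg x) δ hδ)).exists
  refine ⟨m, g, hg, g', hg', ?_, ?_, ?_⟩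
  · rw [← (hT.pow m).norm_map (posPart_nonneg x), abs_sub_comm]
    exact (abs_norm_sub_norm_le _ _).trans hgδ.le
  · rw [← (hT.pow m).norm_map (negPart_nonneg x), abs_sub_comm]
    exact (abs_norm_sub_norm_le _ _).trans hgδ'.le
  · calc ‖(T ^ m) x - (g - g')‖ = ‖((T ^ m) x⁺ - g) - ((T ^ m) x⁻ - g')‖ := by
          rw [sub_sub_sub_comm, ← map_sub, posPart_sub_negPart]
      _ ≤ ‖(T ^ m) x⁺ - g‖ + ‖(T ^ m) x⁻ - g'‖ := norm_sub_le _ _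
      _ ≤ 2 * δ := by linarith

section LeSmulMap

variable [PosSMulMono ℝ E] {A : ℝ} (hA : 0 ≤ A) {g : E}

include hA

theorem le_smul_pow_apply (hg : g ≤ A • T g) (d : ℕ) : g ≤ A ^ d • (T ^ d) g := by
  induction d with
  | zero => simp
  | succ d ih =>
    calc g ≤ A • T g := hg
      _ ≤ A • T (A ^ d • (T ^ d) g) := smul_le_smul_of_nonneg_left (hT.monotone ih) hA
      _ = A ^ (d + 1) • (T ^ (d + 1)) g := by
        rw [map_smul, smul_smul, ← pow_succ', pow_succ' T, mul_apply_eq_comp]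

theorem sum_pow_apply_le_smul_pow_apply (hg : g ≤ A • T g) (K : ℕ) :
    ∑ k ∈ Finset.range K, (T ^ k) g ≤ (∑ k ∈ Finset.range K, A ^ (K - k)) • (T ^ K) g := by
  rw [Finset.sum_smul]
  refine Finset.sum_le_sum fun k hk => ?_
  calc (T ^ k) g ≤ (T ^ k) (A ^ (K - k) • (T ^ (K - k)) g) :=
        (hT.pow k).monotone (hT.le_smul_pow_apply hA hg _)
    _ = A ^ (K - k) • (T ^ K) g := by
      rw [map_smul, ← mul_apply_eq_comp, ← pow_add,
        Nat.add_sub_cancel' (Finset.mem_range.1 hk).le]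

end LeSmulMap

variable [AbstractLSpace E]

theorem norm_posPart_map_sub_norm_negPart_map (x : E) :
    ‖(T x)⁺‖ - ‖(T x)⁻‖ = ‖x⁺‖ - ‖x⁻‖ := by
  have h : (T x)⁺ + T x⁻ = T x⁺ + (T x)⁻ := by
    rw [← sub_eq_sub_iff_add_eq_add, posPart_sub_negPart, ← map_sub, posPart_sub_negPart]
  have hnorm := congrArg norm h
  rw [AbstractLSpace.norm_add_of_nonneg (posPart_nonneg _) (hT.map_nonneg (negPart_nonneg x)),
    AbstractLSpace.norm_add_of_nonneg (hT.map_nonneg (posPart_nonneg x)) (negPart_nonneg _),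
    hT.norm_map (posPart_nonneg x), hT.norm_map (negPart_nonneg x)] at hnorm
  linarith

theorem norm_sum_pow_apply {g : E} (hg : 0 ≤ g) (K : ℕ) :
    ‖∑ k ∈ Finset.range K, (T ^ k) g‖ = K * ‖g‖ := by
  rw [norm_sum_of_nonneg fun k => (hT.pow k).map_nonneg hg,
    Finset.sum_congr rfl fun k _ => (hT.pow k).norm_map hg, Finset.sum_const, Finset.card_range,
    nsmul_eq_mul]

theorem mul_norm_add_le_norm_sum_pow_apply_sub [PosSMulMono ℝ E] {A : ℝ} (hA : 0 ≤ A)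
    {g g' : E} (hg0 : 0 ≤ g) (hg : g ≤ A • T g) (hg0' : 0 ≤ g') (hg' : g' ≤ A • T g')
    (K : ℕ) {B : ℝ} (hB : B = ∑ k ∈ Finset.range K, A ^ (K - k)) :
    K * (‖g‖ + ‖g'‖) + B * ‖(T ^ K) (g - g')‖
      ≤ ‖∑ k ∈ Finset.range K, (T ^ k) (g - g')‖ + B * (‖g‖ + ‖g'‖) := by
  have hB0 : 0 ≤ B := hB ▸ Finset.sum_nonneg fun k _ => pow_nonneg hA _
  have hnonneg {u : E} (hu : 0 ≤ u) : 0 ≤ ∑ k ∈ Finset.range K, (T ^ k) u :=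
    Finset.sum_nonneg fun k _ => (hT.pow k).map_nonneg hu
  have h := norm_sub_le_norm_sub_add_of_le
    (hnonneg hg0) (hT.sum_pow_apply_le_smul_pow_apply hA hg K)
    (hnonneg hg0') (hT.sum_pow_apply_le_smul_pow_apply hA hg' K)
  rw [← hB, ← smul_sub, ← map_sub, norm_smul_of_nonneg hB0, norm_smul_of_nonneg hB0,
    norm_smul_of_nonneg hB0, (hT.pow K).norm_map hg0, (hT.pow K).norm_map hg0',
    hT.norm_sum_pow_apply hg0, hT.norm_sum_pow_apply hg0', ← Finset.sum_sub_distrib] at h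
  simp only [map_sub] at h ⊢
  linarith

variable [HasSolidNorm E]

theorem opNorm_le_one : ‖T‖ ≤ 1 :=
  T.opNorm_le_bound zero_le_one fun x => by
    calc ‖T x‖ = ‖T x⁺ - T x⁻‖ := by rw [← map_sub, posPart_sub_negPart]
      _ ≤ ‖T x⁺‖ + ‖T x⁻‖ := norm_sub_le _ _
      _ = ‖x⁺‖ + ‖x⁻‖ := by rw [hT.norm_map (posPart_nonneg x), hT.norm_map (negPart_nonneg x)]
      _ = 1 * ‖x‖ := by rw [norm_posPart_add_norm_negPart, one_mul]

section LowerBound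

variable [PosSMulMono ℝ E] {C : Set E} (hC : IsAbsorbing T C) {e : E} (he : 0 ≤ e)
  (hle : ∀ g ∈ C, ‖g‖ • e ≤ g) {x : E} (hx : ‖x⁺‖ = ‖x⁻‖)

include hC he hle hx

theorem asymptoticSeminorm_le_of_norm_smul_le :
    asymptoticSeminorm hT.opNorm_le_one x ≤ (1 - ‖e‖) * ‖x‖ := by
  refine le_of_forall_pos_le_add_mul (c := 4 + 2 * ‖e‖) fun δ hδ => ?_
  obtain ⟨m, g, hg, g', hg', hgx, hgx', hm⟩ := hT.exists_approx_of_isAbsorbing hC x hδ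
  have hxnorm := norm_posPart_add_norm_negPart x
  rw [abs_le] at hgx hgx'
  set r := min ‖g‖ ‖g'‖
  have hr : 0 ≤ r := le_min (norm_nonneg g) (norm_nonneg g')
  have hrx : ‖x‖ / 2 - δ ≤ r := le_min (by linarith) (by linarith)
  have hdiff : ‖g - g'‖ ≤ ‖g‖ + ‖g'‖ - 2 * (r * ‖e‖) := by
    rw [← norm_smul_of_nonneg hr]
    exact norm_sub_le_of_nonneg_of_le (smul_nonneg hr he)
      ((smul_le_smul_of_nonneg_right (min_le_left _ _) he).trans (hle g hg))
      ((smul_le_smul_of_nonneg_right (min_le_right _ _) he).trans (hle g' hg'))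
  have happrox : ‖(T ^ m) x‖ ≤ ‖g - g'‖ + 2 * δ :=
    (norm_le_norm_add_norm_sub' _ _).trans (add_le_add_right hm _)
  have := asymptoticSeminorm_le_norm_pow_apply hT.opNorm_le_one m x
  have := mul_le_mul_of_nonneg_right hrx (norm_nonneg e)
  linarith

theorem asymptoticSeminorm_eq_zero_of_norm_smul_le (he0 : e ≠ 0) :
    asymptoticSeminorm hT.opNorm_le_one x = 0 := by
  have horbit : asymptoticSeminorm hT.opNorm_le_one x
      ≤ (1 - ‖e‖) * asymptoticSeminorm hT.opNorm_le_one x := by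
    refine ge_of_tendsto' ((tendsto_norm_pow_apply hT.opNorm_le_one x).const_mul (1 - ‖e‖))
      fun n => ?_
    rw [← asymptoticSeminorm_pow_apply hT.opNorm_le_one n]
    refine hT.asymptoticSeminorm_le_of_norm_smul_le hC he hle ?_
    have := (hT.pow n).norm_posPart_map_sub_norm_negPart_map x
    linarith
  refine le_antisymm ?_ (apply_nonneg _ x)
  by_contra! hpos
  nlinarith [mul_pos (norm_pos_iff.2 he0) hpos]

end LowerBound

theorem asymptoticSeminorm_eq_zero_of_norm_smul {C : Set E} (hC : IsAbsorbing T C) {p : E}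
    (hp : ∀ g ∈ C, asymptoticSeminorm hT.opNorm_le_one (g - ‖g‖ • p) = 0) {x : E}
    (hx : ‖x⁺‖ = ‖x⁻‖) : asymptoticSeminorm hT.opNorm_le_one x = 0 := by
  refine le_antisymm ?_ (apply_nonneg _ x)
  refine le_of_forall_pos_le_add_mul (c := 2 + 2 * ‖p‖) fun δ hδ => ?_
  obtain ⟨m, g, hg, g', hg', hgx, hgx', hm⟩ := hT.exists_approx_of_isAbsorbing hC x hδ
  set a := asymptoticSeminorm hT.opNorm_le_one
  have hnorm : |‖g‖ - ‖g'‖| ≤ 2 * δ := by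
    rw [abs_le] at hgx hgx' ⊢
    constructor <;> linarith
  calc a x = a ((T ^ m) x) := (asymptoticSeminorm_pow_apply _ m x).symm
    _ = a ((T ^ m) x - (g - g') + ((g - ‖g‖ • p) - (g' - ‖g'‖ • p) + (‖g‖ - ‖g'‖) • p)) := by
      rw [sub_smul]
      congr 1
      abel
    _ ≤ a ((T ^ m) x - (g - g')) + (a (g - ‖g‖ • p) + a (g' - ‖g'‖ • p)
        + a ((‖g‖ - ‖g'‖) • p)) := by
      refine (map_add_le_add a _ _).trans (add_le_add_right ?_ _)
      exact (map_add_le_add a _ _).trans (add_le_add_left (map_sub_le_add a _ _) _)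
    _ ≤ 2 * δ + (0 + 0 + 2 * δ * ‖p‖) := by
      rw [hp g hg, hp g' hg', map_smul_eq_mul, Real.norm_eq_abs]
      gcongr
      · exact (asymptoticSeminorm_le_norm _ _).trans hm
      · exact asymptoticSeminorm_le_norm _ p
    _ = 0 + (2 + 2 * ‖p‖) * δ := by ring

section LeSmulMap

variable [PosSMulMono ℝ E] {C : Set E} {A : ℝ} (hA : 0 ≤ A) (hC : IsAbsorbing T C)
  (hC0 : ∀ g ∈ C, 0 ≤ g) (hle : ∀ g ∈ C, g ≤ A • T g)

include hA hC hC0 hle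

theorem mul_norm_le_norm_sum_pow_apply (K : ℕ) (y : E) :
    K * ‖y‖ ≤ ‖∑ k ∈ Finset.range K, (T ^ k) y‖
      + (∑ k ∈ Finset.range K, A ^ (K - k)) * (‖y‖ - asymptoticSeminorm hT.opNorm_le_one y) := by
  set B := ∑ k ∈ Finset.range K, A ^ (K - k) with hB
  have hB0 : 0 ≤ B := Finset.sum_nonneg fun k _ => pow_nonneg hA _
  refine le_of_forall_pos_le_add_mul (c := 4 * K + 4 * B) fun δ hδ => ?_
  obtain ⟨m, g, hg, g', hg', hgy, hgy', hm⟩ := hT.exists_approx_of_isAbsorbing hC y hδ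
  have hkey := hT.mul_norm_add_le_norm_sum_pow_apply_sub hA (hC0 g hg) (hle g hg)
    (hC0 g' hg') (hle g' hg') K hB
  have hy := norm_posPart_add_norm_negPart y
  rw [abs_le] at hgy hgy'
  have hasymp : asymptoticSeminorm hT.opNorm_le_one y ≤ ‖(T ^ K) (g - g')‖ + 2 * δ := by
    refine (asymptoticSeminorm_le_norm_pow_apply hT.opNorm_le_one (K + m) y).trans ?_
    rw [pow_add, mul_apply_eq_comp]
    refine (norm_le_norm_add_norm_sub' _ ((T ^ K) (g - g'))).trans (add_le_add_right ?_ _)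
    rw [← map_sub]
    exact (norm_pow_apply_le hT.opNorm_le_one K _).trans hm
  have hsum : ‖∑ k ∈ Finset.range K, (T ^ k) (g - g')‖
      ≤ ‖∑ k ∈ Finset.range K, (T ^ k) y‖ + K * (2 * δ) := by
    have hsplit : ∑ k ∈ Finset.range K, (T ^ k) (g - g') = (T ^ m) (∑ k ∈ Finset.range K, (T ^ k) y)
        - ∑ k ∈ Finset.range K, (T ^ k) ((T ^ m) y - (g - g')) := by
      rw [map_sum, ← Finset.sum_sub_distrib]
      refine Finset.sum_congr rfl fun k _ => ?_
      rw [map_sub (T ^ k) ((T ^ m) y), ← mul_apply_eq_comp, ← mul_apply_eq_comp, ← pow_add,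
        ← pow_add, add_comm m k, sub_sub_cancel]
    rw [hsplit]
    refine (norm_sub_le _ _).trans (add_le_add (norm_pow_apply_le hT.opNorm_le_one m _) ?_)
    refine (norm_sum_le_of_le _ fun k _ =>
      (norm_pow_apply_le hT.opNorm_le_one k _).trans hm).trans_eq ?_
    rw [Finset.sum_const, Finset.card_range, nsmul_eq_mul]
  nlinarith [mul_le_mul_of_nonneg_left hasymp hB0, (Nat.cast_nonneg K : (0 : ℝ) ≤ K)]

theorem asymptoticSeminorm_sub_map_eq_zero (f : E) :
    asymptoticSeminorm hT.opNorm_le_one (f - T f) = 0 := by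
  set a := asymptoticSeminorm hT.opNorm_le_one
  set y := f - T f
  have hbound (K : ℕ) : K * a y ≤ 2 * ‖f‖ := by
    set B := ∑ k ∈ Finset.range K, A ^ (K - k)
    have hlim : Tendsto (fun n : ℕ => ‖(T ^ n) y‖) atTop (𝓝 (a y)) := tendsto_norm_pow_apply _ y
    have hlim' : Tendsto (fun n => 2 * ‖f‖ + B * (‖(T ^ n) y‖ - a y)) atTop (𝓝 (2 * ‖f‖)) := by
      simpa only [sub_self, mul_zero, add_zero] using
        ((hlim.sub_const (a y)).const_mul B).const_add (2 * ‖f‖)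
    refine le_of_tendsto_of_tendsto' (hlim.const_mul (K : ℝ)) hlim' fun n => ?_
    have hTy : (T ^ n) y = (T ^ n) f - T ((T ^ n) f) := by
      rw [map_sub, ← mul_apply_eq_comp (T ^ n), ← mul_apply_eq_comp T, ← pow_succ, ← pow_succ']
    have hsum : ‖∑ k ∈ Finset.range K, (T ^ k) ((T ^ n) y)‖ ≤ 2 * ‖f‖ := by
      rw [hTy, sum_pow_apply_sub_map, two_mul]
      exact (norm_sub_le _ _).trans (add_le_add (norm_pow_apply_le hT.opNorm_le_one n f)
        ((norm_pow_apply_le hT.opNorm_le_one K _).trans (norm_pow_apply_le hT.opNorm_le_one n f)))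
    have := hT.mul_norm_le_norm_sum_pow_apply hA hC hC0 hle K ((T ^ n) y)
    rw [asymptoticSeminorm_pow_apply] at this
    exact this.trans (add_le_add_left hsum _)
  refine le_antisymm ?_ (apply_nonneg _ y)
  by_contra! hpos
  obtain ⟨K, hK⟩ := exists_nat_gt (2 * ‖f‖ / a y)
  exact (hbound K).not_gt ((div_lt_iff₀ hpos).1 hK)

end LeSmulMap

end IsMarkovOperator

end Markov

/-- A countable family of inverse branches `x ↦ ε / (n j + x)`, `ε = ±1`, of an interval map of
Gauss type. Their images tile the interval `(lo, hi)` up to the countable set `exceptional`, and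
they shrink distances uniformly. -/
structure InversionSystem (J : Type*) where
  n : J → ℝ
  ε : ℝ
  lo : ℝ
  hi : ℝ
  exceptional : Set ℝ
  lo_lt_hi : lo < hi
  abs_ε : |ε| = 1
  mapsTo : ∀ j, ∀ x ∈ Set.Ioo lo hi, ε / (n j + x) ∈ Set.Ioo lo hi
  expanding : ∀ j, ∀ x ∈ Set.Ioo lo hi, ∀ y ∈ Set.Ioo lo hi, 1 + |x - y| ≤ |n j + x| * |n j + y|
  index_unique : ∀ i j, ∀ x ∈ Set.Ioo lo hi, ∀ y ∈ Set.Ioo lo hi, n i + x = n j + y → i = j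
  countable_exceptional : exceptional.Countable
  exists_branch : ∀ y ∈ Set.Ioo lo hi, y ∉ exceptional →
    ∃ j, ∃ x ∈ Set.Ioo lo hi, ε / (n j + x) = y

namespace InversionSystem

variable {J : Type*} (s : InversionSystem J)

/-- The interval on which the map acts. -/
def I : Set ℝ := Set.Ioo s.lo s.hi

/-- Lebesgue measure on the interval. -/
noncomputable def μ : Measure ℝ := volume.restrict s.I

/-- The inverse branches of the map. -/
noncomputable def inverseBranch (j : J) (x : ℝ) : ℝ := s.ε / (s.n j + x)

instance : IsFiniteMeasure s.μ := by
  unfold μ I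
  infer_instance

theorem measurableSet_I : MeasurableSet s.I := measurableSet_Ioo

theorem ae_mem : ∀ᵐ x ∂s.μ, x ∈ s.I := ae_restrict_mem s.measurableSet_I

theorem ε_ne_zero : s.ε ≠ 0 := abs_pos.1 (s.abs_ε ▸ one_pos)

section InverseBranch

variable {i j : J} {x y : ℝ}

theorem add_ne_zero (j : J) (hx : x ∈ s.I) : s.n j + x ≠ 0 := fun h => by
  have := s.expanding j x hx x hx
  norm_num [h] at this

theorem mapsTo_inverseBranch (j : J) : Set.MapsTo (s.inverseBranch j) s.I s.I := s.mapsTo j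

theorem abs_inverseBranch_sub_le (j : J) (hx : x ∈ s.I) (hy : y ∈ s.I) :
    |s.inverseBranch j x - s.inverseBranch j y| ≤ |x - y| / (1 + |x - y|) := by
  have hsub : s.inverseBranch j x - s.inverseBranch j y
      = s.ε * (y - x) / ((s.n j + x) * (s.n j + y)) := by
    have := s.add_ne_zero j hx
    have := s.add_ne_zero j hy
    unfold inverseBranch
    field_simp
    ring
  rw [hsub, abs_div, abs_mul, abs_mul, s.abs_ε, one_mul, abs_sub_comm y x]
  exact div_le_div_of_nonneg_left (abs_nonneg _) (by positivity) (s.expanding j x hx y hy)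

theorem add_one_mul_abs_inverseBranch_sub_le_one (j : J) (hx : x ∈ s.I) (hy : y ∈ s.I) {k : ℝ}
    (hk : 0 ≤ k) (h : k * |x - y| ≤ 1) :
    (k + 1) * |s.inverseBranch j x - s.inverseBranch j y| ≤ 1 := by
  calc (k + 1) * |s.inverseBranch j x - s.inverseBranch j y|
      ≤ (k + 1) * (|x - y| / (1 + |x - y|)) :=
        mul_le_mul_of_nonneg_left (s.abs_inverseBranch_sub_le j hx hy) (by positivity)
    _ ≤ 1 := by
      rw [← mul_div_assoc, div_le_one (by positivity)]
      linarith

theorem add_eq_add_of_inverseBranch_eq (hx : x ∈ s.I) (hy : y ∈ s.I)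
    (h : s.inverseBranch i x = s.inverseBranch j y) : s.n i + x = s.n j + y := by
  rwa [inverseBranch, inverseBranch, div_eq_div_iff (s.add_ne_zero i hx) (s.add_ne_zero j hy),
    mul_right_inj' s.ε_ne_zero, eq_comm] at h

theorem injOn_inverseBranch (j : J) : Set.InjOn (s.inverseBranch j) s.I := fun _ hx _ hy h =>
  add_left_cancel (s.add_eq_add_of_inverseBranch_eq hx hy h)

theorem hasDerivWithinAt_inverseBranch (j : J) (hx : x ∈ s.I) :
    HasDerivWithinAt (s.inverseBranch j) (-s.ε / (s.n j + x) ^ 2) s.I x := by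
  refine (((hasDerivAt_const x s.ε).fun_div ((hasDerivAt_id' x).const_add (s.n j))
    (s.add_ne_zero j hx)).congr_deriv ?_).hasDerivWithinAt
  ring

theorem measurableSet_image_inverseBranch (j : J) : MeasurableSet (s.inverseBranch j '' s.I) :=
  s.measurableSet_I.image_of_continuousOn_injOn
    (fun _ hx => (s.hasDerivWithinAt_inverseBranch j hx).continuousWithinAt)
    (s.injOn_inverseBranch j)

theorem pairwise_disjoint_image_inverseBranch :
    Pairwise (Function.onFun Disjoint fun j => s.inverseBranch j '' s.I) := by
  intro i j hij
  rw [Function.onFun, Set.disjoint_left]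
  rintro _ ⟨x, hx, rfl⟩ ⟨y, hy, hyx⟩
  exact hij (s.index_unique i j x hx y hy (s.add_eq_add_of_inverseBranch_eq hy hx hyx).symm)

theorem iUnion_image_inverseBranch_ae_eq : (⋃ j, s.inverseBranch j '' s.I) =ᵐ[volume] s.I := by
  refine EventuallyLE.antisymm (LE.le.eventuallyLE ?_) ?_
  · exact Set.iUnion_subset fun j => (s.mapsTo_inverseBranch j).image_subset
  · filter_upwards [measure_eq_zero_iff_ae_notMem.1 (s.countable_exceptional.measure_zero volume)]
      with y hy hyI
    obtain ⟨j, x, hx, hxy⟩ := s.exists_branch y hyI hy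
    exact Set.mem_iUnion.2 ⟨j, x, hx, hxy⟩

@[fun_prop]
theorem measurable_inverseBranch (j : J) : Measurable (s.inverseBranch j) := by
  unfold inverseBranch
  fun_prop

end InverseBranch

/-- The contribution of the inverse branch `j` to the transfer operator. -/
noncomputable def transferTerm {F : Type*} [SMul ℝ F] (j : J) (f : ℝ → F) (x : ℝ) : F :=
  (1 / (s.n j + x) ^ 2 : ℝ) • f (s.inverseBranch j x)

/-- The transfer operator on functions. -/
noncomputable def transfer {F : Type*} [NormedAddCommGroup F] [NormedSpace ℝ F]
    (f : ℝ → F) (x : ℝ) : F :=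
  ∑' j, s.transferTerm j f x

section TransferTerm

variable {F : Type*} [NormedAddCommGroup F] [NormedSpace ℝ F]

theorem enorm_transferTerm (j : J) (f : ℝ → F) (x : ℝ) :
    ‖s.transferTerm j f x‖ₑ
      = ENNReal.ofReal (1 / (s.n j + x) ^ 2) * ‖f (s.inverseBranch j x)‖ₑ := by
  rw [transferTerm, enorm_smul, Real.enorm_eq_ofReal (by positivity)]

theorem transfer_smul (r : ℝ) (f : ℝ → F) : s.transfer (r • f) = r • s.transfer f := by
  ext x
  simp only [transfer, transferTerm, Pi.smul_apply]
  rw [← tsum_const_smul'' r]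
  exact tsum_congr fun j => smul_comm _ _ _

end TransferTerm

section Countable

variable [Countable J]

theorem lintegral_transfer {g : ℝ → ENNReal} (hg : Measurable g) :
    ∫⁻ x, ∑' j, ENNReal.ofReal (1 / (s.n j + x) ^ 2) * g (s.inverseBranch j x) ∂s.μ
      = ∫⁻ x, g x ∂s.μ := by
  rw [lintegral_tsum fun j => by fun_prop]
  calc ∑' j, ∫⁻ x, ENNReal.ofReal (1 / (s.n j + x) ^ 2) * g (s.inverseBranch j x) ∂s.μ
      = ∑' j, ∫⁻ y in s.inverseBranch j '' s.I, g y := by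
        refine tsum_congr fun j => ?_
        rw [lintegral_image_eq_lintegral_abs_deriv_mul s.measurableSet_I
          (fun x hx => s.hasDerivWithinAt_inverseBranch j hx) (s.injOn_inverseBranch j)]
        refine lintegral_congr fun x => ?_
        rw [abs_div, abs_neg, s.abs_ε, abs_of_nonneg (sq_nonneg _)]
    _ = ∫⁻ y in ⋃ j, s.inverseBranch j '' s.I, g y :=
        (lintegral_iUnion s.measurableSet_image_inverseBranch
          s.pairwise_disjoint_image_inverseBranch g).symm
    _ = ∫⁻ x, g x ∂s.μ := setLIntegral_congr s.iUnion_image_inverseBranch_ae_eq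

theorem ae_inverseBranch {p : ℝ → Prop} (hp : ∀ᵐ x ∂s.μ, p x) :
    ∀ᵐ x ∂s.μ, ∀ j, p (s.inverseBranch j x) := by
  obtain ⟨t, hpt, ht, ht0⟩ := exists_measurable_superset_of_null (ae_iff.1 hp)
  have hmeas : Measurable (t.indicator (1 : ℝ → ENNReal)) := measurable_one.indicator ht
  have h := s.lintegral_transfer hmeas
  have hsum : Measurable fun x => ∑' j,
      ENNReal.ofReal (1 / (s.n j + x) ^ 2) * t.indicator 1 (s.inverseBranch j x) :=
    Measurable.tsum fun j => by fun_prop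
  rw [lintegral_indicator_one ht, ht0, lintegral_eq_zero_iff hsum] at h
  filter_upwards [h, s.ae_mem] with x hx hxI j
  by_contra hj
  have hterm := ENNReal.tsum_eq_zero.1 hx j
  have hpos : 0 < 1 / (s.n j + x) ^ 2 := by
    have := s.add_ne_zero j hxI
    positivity
  rw [Set.indicator_of_mem (hpt hj), Pi.one_apply, mul_one, ENNReal.ofReal_eq_zero] at hterm
  exact hterm.not_gt hpos

section

variable {F : Type*} [NormedAddCommGroup F] [NormedSpace ℝ F] {f g : ℝ → F}

theorem ae_transferTerm_congr (h : f =ᵐ[s.μ] g) :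
    ∀ᵐ x ∂s.μ, ∀ j, s.transferTerm j f x = s.transferTerm j g x := by
  filter_upwards [s.ae_inverseBranch h] with x hx j
  rw [transferTerm, transferTerm, hx j]

theorem transfer_congr (h : f =ᵐ[s.μ] g) : s.transfer f =ᵐ[s.μ] s.transfer g := by
  filter_upwards [s.ae_transferTerm_congr h] with x hx
  exact tsum_congr hx

theorem aestronglyMeasurable_transferTerm (hf : AEStronglyMeasurable f s.μ) (j : J) :
    AEStronglyMeasurable (s.transferTerm j f) s.μ := by
  have h : s.transferTerm j f =ᵐ[s.μ] s.transferTerm j (hf.mk f) :=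
    (s.ae_transferTerm_congr hf.ae_eq_mk).mono fun x hx => hx j
  refine AEStronglyMeasurable.congr ?_ h.symm
  have hweight : StronglyMeasurable fun x => (1 / (s.n j + x) ^ 2 : ℝ) :=
    (by fun_prop : Measurable fun x => (1 / (s.n j + x) ^ 2 : ℝ)).stronglyMeasurable
  exact (hweight.smul (hf.stronglyMeasurable_mk.comp_measurable
    (s.measurable_inverseBranch j))).aestronglyMeasurable

theorem lintegral_tsum_enorm_transferTerm (hf : AEStronglyMeasurable f s.μ) :
    ∫⁻ x, ∑' j, ‖s.transferTerm j f x‖ₑ ∂s.μ = ∫⁻ x, ‖f x‖ₑ ∂s.μ := by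
  have hmk : ∫⁻ x, ‖f x‖ₑ ∂s.μ = ∫⁻ x, ‖hf.mk f x‖ₑ ∂s.μ :=
    lintegral_congr_ae (hf.ae_eq_mk.fun_comp (‖·‖ₑ))
  rw [hmk, ← s.lintegral_transfer hf.stronglyMeasurable_mk.enorm]
  refine lintegral_congr_ae ?_
  filter_upwards [s.ae_transferTerm_congr hf.ae_eq_mk] with x hx
  refine tsum_congr fun j => ?_
  rw [hx j, enorm_transferTerm]

theorem lintegral_tsum_enorm_transferTerm_lt_top (hf : Integrable f s.μ) :
    ∫⁻ x, ∑' j, ‖s.transferTerm j f x‖ₑ ∂s.μ < ⊤ := by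
  rw [s.lintegral_tsum_enorm_transferTerm hf.1]
  exact hf.2

theorem integrable_transferTerm (hf : Integrable f s.μ) (j : J) :
    Integrable (s.transferTerm j f) s.μ :=
  ⟨s.aestronglyMeasurable_transferTerm hf.1 j,
    (lintegral_mono fun _ => ENNReal.le_tsum j).trans_lt
      (s.lintegral_tsum_enorm_transferTerm_lt_top hf)⟩

theorem ae_summable_norm_transferTerm (hf : Integrable f s.μ) :
    ∀ᵐ x ∂s.μ, Summable fun j => ‖s.transferTerm j f x‖ := by
  filter_upwards [ae_lt_top' (AEMeasurable.tsum fun j =>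
    (s.aestronglyMeasurable_transferTerm hf.1 j).enorm)
    (s.lintegral_tsum_enorm_transferTerm_lt_top hf).ne] with x hx
  simpa only [toReal_enorm] using ENNReal.summable_toReal hx.ne

theorem integrable_transfer [CompleteSpace F] (hf : Integrable f s.μ) :
    Integrable (s.transfer f) s.μ := by
  refine ⟨?_, (lintegral_mono fun x => enorm_tsum_le_tsum_enorm).trans_lt
    (s.lintegral_tsum_enorm_transferTerm_lt_top hf)⟩
  refine aestronglyMeasurable_of_tendsto_ae (ι := Finset J) atTop
    (f := fun t x => ∑ j ∈ t, s.transferTerm j f x) (fun t => ?_) ?_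
  · exact Finset.aestronglyMeasurable_fun_sum _ fun j _ =>
      s.aestronglyMeasurable_transferTerm hf.1 j
  · filter_upwards [s.ae_summable_norm_transferTerm hf] with x hx using hx.of_norm.hasSum

theorem integral_norm_transfer_le [CompleteSpace F] (hf : Integrable f s.μ) :
    ∫ x, ‖s.transfer f x‖ ∂s.μ ≤ ∫ x, ‖f x‖ ∂s.μ := by
  rw [integral_norm_eq_lintegral_enorm (s.integrable_transfer hf).1,
    integral_norm_eq_lintegral_enorm hf.1]
  refine ENNReal.toReal_mono hf.2.ne ?_
  rw [← s.lintegral_tsum_enorm_transferTerm hf.1]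
  exact lintegral_mono fun x => enorm_tsum_le_tsum_enorm

theorem transfer_add [CompleteSpace F] (hf : Integrable f s.μ) (hg : Integrable g s.μ) :
    s.transfer (f + g) =ᵐ[s.μ] s.transfer f + s.transfer g := by
  filter_upwards [s.ae_summable_norm_transferTerm hf, s.ae_summable_norm_transferTerm hg]
    with x hfx hgx
  simp only [transfer, transferTerm, Pi.add_apply, smul_add]
  exact hfx.of_norm.tsum_add hgx.of_norm

end

end Countable

end InversionSystem

section LpOne

variable {α : Type*} [MeasurableSpace α] {μ : Measure α}

theorem L1_norm_eq_integral_of_nonneg {z : Lp ℝ 1 μ} (hz : 0 ≤ z) : ‖z‖ = ∫ x, z x ∂μ := by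
  rw [L1.norm_eq_integral_norm]
  refine integral_congr_ae ?_
  filter_upwards [(Lp.coeFn_nonneg z).2 hz] with x hx
  exact Real.norm_of_nonneg hx

theorem L1_norm_posPart_eq_norm_negPart {z : Lp ℝ 1 μ} (hz : ∫ x, z x ∂μ = 0) : ‖z⁺‖ = ‖z⁻‖ := by
  rw [L1_norm_eq_integral_of_nonneg (posPart_nonneg z),
    L1_norm_eq_integral_of_nonneg (negPart_nonneg z), ← sub_eq_zero,
    ← integral_sub (L1.integrable_coeFn _) (L1.integrable_coeFn _), ← hz]
  refine integral_congr_ae ?_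
  conv_rhs => rw [← posPart_sub_negPart z]
  exact (Lp.coeFn_sub z⁺ z⁻).symm

end LpOne

namespace InversionSystem

variable {J : Type*} [Countable J] (s : InversionSystem J)

/-- The transfer operator on `L¹`. -/
noncomputable def transferL1 : Lp ℝ 1 s.μ →L[ℝ] Lp ℝ 1 s.μ :=
  LinearMap.mkContinuous
    { toFun := fun f => (s.integrable_transfer (L1.integrable_coeFn f)).toL1 _
      map_add' := fun f g => by
        rw [← Integrable.toL1_add, Integrable.toL1_eq_toL1_iff]
        exact (s.transfer_congr (Lp.coeFn_add f g)).trans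
          (s.transfer_add (L1.integrable_coeFn f) (L1.integrable_coeFn g))
      map_smul' := fun r f => by
        rw [RingHom.id_apply, ← Integrable.toL1_smul', Integrable.toL1_eq_toL1_iff,
          ← s.transfer_smul]
        exact s.transfer_congr (Lp.coeFn_smul r f) }
    1 fun f => by
      rw [one_mul, LinearMap.coe_mk, AddHom.coe_mk, L1.norm_eq_integral_norm,
        L1.norm_eq_integral_norm]
      refine (integral_congr_ae ((Integrable.coeFn_toL1 _).fun_comp (‖·‖))).trans_le ?_
      exact s.integral_norm_transfer_le (L1.integrable_coeFn f)

theorem coeFn_transferL1 {z : Lp ℝ 1 s.μ} {f : ℝ → ℝ} (h : z =ᵐ[s.μ] f) :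
    s.transferL1 z =ᵐ[s.μ] s.transfer f :=
  (Integrable.coeFn_toL1 (s.integrable_transfer (L1.integrable_coeFn z))).trans
    (s.transfer_congr h)

theorem ae_transferTerm_nonneg {z : Lp ℝ 1 s.μ} (hz : 0 ≤ z) :
    ∀ᵐ x ∂s.μ, ∀ j, 0 ≤ s.transferTerm j z x := by
  filter_upwards [s.ae_inverseBranch ((Lp.coeFn_nonneg z).2 hz)] with x hx j
  exact mul_nonneg (by positivity) (hx j)

theorem isMarkovOperator_transferL1 : IsMarkovOperator s.transferL1 where
  map_nonneg {z} hz := by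
    rw [← Lp.coeFn_nonneg]
    filter_upwards [s.coeFn_transferL1 (ae_eq_refl z), s.ae_transferTerm_nonneg hz] with x hTz hx
    rw [hTz]
    exact tsum_nonneg hx
  norm_map {z} hz := by
    rw [L1.norm_def, L1.norm_def,
      ← s.lintegral_tsum_enorm_transferTerm (L1.integrable_coeFn z).1]
    congr 1
    refine lintegral_congr_ae ?_
    filter_upwards [s.coeFn_transferL1 (ae_eq_refl z), s.ae_transferTerm_nonneg hz,
      s.ae_summable_norm_transferTerm (L1.integrable_coeFn z)] with x hTz hx hsum
    rw [hTz, transfer, Real.enorm_eq_ofReal (tsum_nonneg hx),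
      ENNReal.ofReal_tsum_of_nonneg hx hsum.of_norm]
    exact tsum_congr fun j => (Real.enorm_eq_ofReal (hx j)).symm

theorem exists_hasSum_transferL1 {z : Lp ℝ 1 s.μ} {f : ℝ → ℝ} (h : z =ᵐ[s.μ] f) :
    ∃ b : J → Lp ℝ 1 s.μ,
      (∀ j, b j =ᵐ[s.μ] s.transferTerm j f) ∧ HasSum b (s.transferL1 z) := by
  have hf : Integrable f s.μ := (L1.integrable_coeFn z).congr h
  have hmeas (j : J) := (s.aestronglyMeasurable_transferTerm hf.1 j).enorm
  set b : J → Lp ℝ 1 s.μ := fun j => (s.integrable_transferTerm hf j).toL1 _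
  have hb (j : J) : b j =ᵐ[s.μ] s.transferTerm j f := Integrable.coeFn_toL1 _
  refine ⟨b, hb, ?_⟩
  have hfinite : ∑' j, ∫⁻ x, ‖s.transferTerm j f x‖ₑ ∂s.μ ≠ ⊤ := by
    rw [← lintegral_tsum hmeas]
    exact (s.lintegral_tsum_enorm_transferTerm_lt_top hf).ne
  rw [HasSum, SummationFilter.unconditional_filter, tendsto_iff_edist_tendsto_0]
  refine tendsto_of_tendsto_of_tendsto_of_le_of_le tendsto_const_nhds
    (ENNReal.tendsto_tsum_compl_atTop_zero hfinite) (fun _ => bot_le) fun t => ?_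
  rw [L1.edist_def, ← lintegral_tsum fun j : {j // j ∉ t} => hmeas j]
  refine lintegral_mono_ae ?_
  filter_upwards [Lp.coeFn_finsetSum t b, ae_all_iff.2 hb, s.coeFn_transferL1 h,
    s.ae_summable_norm_transferTerm hf] with x hsum hbx hTz hsummable
  rw [hsum, Finset.sum_apply, Finset.sum_congr rfl fun j _ => hbx j, hTz, edist_comm,
    edist_eq_enorm_sub, transfer, ← hsummable.of_norm.sum_add_tsum_subtype_compl t,
    add_sub_cancel_left]
  exact enorm_tsum_le_tsum_enorm

section Iterate

variable {F : Type*} [NormedAddCommGroup F] [NormedSpace ℝ F] [CompleteSpace F] {f : ℝ → F}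

theorem transfer_comp_clm (φ : F →L[ℝ] ℝ) (hf : Integrable f s.μ) :
    s.transfer (fun x => φ (f x)) =ᵐ[s.μ] fun x => φ (s.transfer f x) := by
  filter_upwards [s.ae_summable_norm_transferTerm hf] with x hx
  rw [transfer, transfer, φ.map_tsum hx.of_norm]
  exact tsum_congr fun j => (φ.map_smul _ _).symm

theorem integrable_iterate_transfer (hf : Integrable f s.μ) (n : ℕ) :
    Integrable (s.transfer^[n] f) s.μ := by
  induction n with
  | zero => exact hf
  | succ n ih =>
    rw [Function.iterate_succ_apply']
    exact s.integrable_transfer ih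

theorem coeFn_pow_transferL1 (φ : F →L[ℝ] ℝ) (hf : Integrable f s.μ) (n : ℕ) :
    (s.transferL1 ^ n) ((φ.integrable_comp hf).toL1 _)
      =ᵐ[s.μ] fun x => φ (s.transfer^[n] f x) := by
  induction n with
  | zero => exact (φ.integrable_comp hf).coeFn_toL1
  | succ n ih =>
    rw [pow_succ', Function.iterate_succ_apply']
    exact (s.coeFn_transferL1 ih).trans
      (s.transfer_comp_clm φ (s.integrable_iterate_transfer hf n))

variable (hs : ∀ z : Lp ℝ 1 s.μ, ‖z⁺‖ = ‖z⁻‖ →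
  asymptoticSeminorm s.isMarkovOperator_transferL1.opNorm_le_one z = 0)

include hs

theorem tendsto_integral_norm_clm_iterate_transfer (φ : F →L[ℝ] ℝ) (hf : Integrable f s.μ)
    (hf0 : ∫ x, f x ∂s.μ = 0) :
    Tendsto (fun n : ℕ => ∫ x, ‖φ (s.transfer^[n] f x)‖ ∂s.μ) atTop (𝓝 0) := by
  set z := (φ.integrable_comp hf).toL1 _
  have hz : ∫ x, z x ∂s.μ = 0 := by
    rw [integral_congr_ae (φ.integrable_comp hf).coeFn_toL1, φ.integral_comp_comm hf, hf0,
      map_zero]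
  rw [← hs z (L1_norm_posPart_eq_norm_negPart hz)]
  refine (tendsto_norm_pow_apply _ z).congr fun n => ?_
  rw [L1.norm_eq_integral_norm]
  exact integral_congr_ae ((s.coeFn_pow_transferL1 φ hf n).fun_comp (‖·‖))

theorem tendsto_integral_norm_iterate_transfer {f : ℝ → ℂ} (hf : Integrable f s.μ)
    (hf0 : ∫ x, f x ∂s.μ = 0) :
    Tendsto (fun n : ℕ => ∫ x, ‖s.transfer^[n] f x‖ ∂s.μ) atTop (𝓝 0) := by
  have hreIm :=
    (s.tendsto_integral_norm_clm_iterate_transfer hs Complex.reCLM hf hf0).add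
      (s.tendsto_integral_norm_clm_iterate_transfer hs Complex.imCLM hf hf0)
  rw [add_zero] at hreIm
  refine squeeze_zero (fun n => integral_nonneg fun x => norm_nonneg _) (fun n => ?_) hreIm
  have hn := s.integrable_iterate_transfer hf n
  have hre := (Complex.reCLM.integrable_comp hn).norm
  have him := (Complex.imCLM.integrable_comp hn).norm
  rw [← integral_add hre him]
  exact integral_mono hn.norm (hre.add him) fun x => Complex.norm_le_abs_re_add_abs_im _

end Iterate

end InversionSystem

section PointedCone

variable {E : Type*} [NormedAddCommGroup E] [NormedSpace ℝ E] (C : PointedCone ℝ E)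

theorem infDist_pointedCone_add_le (x y : E) :
    Metric.infDist (x + y) (C : Set E) ≤ Metric.infDist x C + Metric.infDist y C := by
  refine le_of_forall_pos_lt_add fun ε hε => ?_
  obtain ⟨g, hg, hxg⟩ :=
    (Metric.infDist_lt_iff C.nonempty).1 (lt_add_of_pos_right (Metric.infDist x C) (half_pos hε))
  obtain ⟨h, hh, hyh⟩ :=
    (Metric.infDist_lt_iff C.nonempty).1 (lt_add_of_pos_right (Metric.infDist y C) (half_pos hε))
  calc Metric.infDist (x + y) C ≤ dist (x + y) (g + h) :=
        Metric.infDist_le_dist_of_mem (C.add_mem hg hh)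
    _ ≤ dist x g + dist y h := dist_add_add_le _ _ _ _
    _ < Metric.infDist x C + Metric.infDist y C + ε := by linarith

end PointedCone

theorem exists_uniformContinuous_norm_sub_le {α : Type*} [UniformSpace α]
    [WeaklyLocallyCompactSpace α] [NormalSpace α] [MeasurableSpace α] [BorelSpace α] {μ : Measure α}
    [μ.Regular] {u : Lp ℝ 1 μ} (hu : 0 ≤ u) {δ : ℝ} (hδ : 0 < δ) :
    ∃ (z : Lp ℝ 1 μ) (v : α → ℝ),
      UniformContinuous v ∧ (∀ x, 0 ≤ v x) ∧ z =ᵐ[μ] v ∧ ‖u - z‖ ≤ δ := by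
  obtain ⟨g, hgsupp, hug, hg, hgint⟩ :=
    (L1.integrable_coeFn u).exists_hasCompactSupport_integral_sub_le hδ
  refine ⟨hgint.pos_part.toL1, fun x => max (g x) 0, ?_, fun x => le_max_right _ _,
    hgint.pos_part.coeFn_toL1, ?_⟩
  · have hsupp : HasCompactSupport fun x => max (g x) 0 :=
      hgsupp.comp_left (g := fun y => max y 0) (max_self 0)
    exact hsupp.uniformContinuous_of_continuous (hg.max continuous_const)
  · rw [L1.norm_eq_integral_norm]
    refine (integral_mono_ae (L1.integrable_coeFn _).norm
      ((L1.integrable_coeFn u).sub hgint).norm ?_).trans hug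
    filter_upwards [Lp.coeFn_sub u hgint.pos_part.toL1, hgint.pos_part.coeFn_toL1,
      (Lp.coeFn_nonneg u).2 hu] with x hsub hgx hux
    rw [hsub, Pi.sub_apply, hgx, ← max_eq_left hux]
    exact abs_max_sub_max_le_abs _ _ _

namespace InversionSystem

variable {J : Type*} (s : InversionSystem J) {C : PointedCone ℝ (Lp ℝ 1 s.μ)}

theorem infDist_le_of_ae_eq_mul {e z : Lp ℝ 1 s.μ} (he : e ∈ C) {v : ℝ → ℝ} {ω : ℝ}
    (hz : z =ᵐ[s.μ] fun x => v x * e x) (hv0 : ∀ x ∈ s.I, 0 ≤ v x)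
    (hv : ∀ x ∈ s.I, ∀ y ∈ s.I, |v x - v y| ≤ ω) : Metric.infDist z C ≤ ω * ‖e‖ := by
  obtain ⟨x₀, hx₀⟩ : s.I.Nonempty := Set.nonempty_Ioo.2 s.lo_lt_hi
  calc Metric.infDist z C ≤ dist z (v x₀ • e) :=
        Metric.infDist_le_dist_of_mem (C.smul_mem (hv0 x₀ hx₀) he)
    _ = ‖z - v x₀ • e‖ := dist_eq_norm _ _
    _ ≤ ω * ‖e‖ := by
      refine Lp.norm_le_mul_norm_of_ae_le_mul ?_
      filter_upwards [Lp.coeFn_sub z (v x₀ • e), Lp.coeFn_smul (v x₀) e, hz, s.ae_mem]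
        with x hsub hsmul hzx hx
      rw [hsub, Pi.sub_apply, hsmul, hzx, Pi.smul_apply, smul_eq_mul, ← sub_mul, norm_mul]
      exact mul_le_mul_of_nonneg_right (hv x hx x₀ hx₀) (norm_nonneg _)

section Absorbing

variable [Countable J] {G : Set (Lp ℝ 1 s.μ)} (hG : ∀ g ∈ G, 0 ≤ g) (hGC : G ⊆ C)
  (hbranch : ∀ j, ∀ g ∈ G, ∀ b : Lp ℝ 1 s.μ, b =ᵐ[s.μ] s.transferTerm j g → b ∈ G)

include hG hGC hbranch

theorem infDist_pow_transferL1_le (k : ℕ) {e z : Lp ℝ 1 s.μ} (he : e ∈ G) {v : ℝ → ℝ} {ω : ℝ}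
    (hz : z =ᵐ[s.μ] fun x => v x * e x) (hv0 : ∀ x ∈ s.I, 0 ≤ v x)
    (hv : ∀ x ∈ s.I, ∀ y ∈ s.I, k * |x - y| ≤ 1 → |v x - v y| ≤ ω) :
    Metric.infDist ((s.transferL1 ^ k) z) C ≤ ω * ‖e‖ := by
  induction k generalizing e z v with
  | zero =>
    refine s.infDist_le_of_ae_eq_mul (hGC he) hz hv0 fun x hx y hy => hv x hx y hy ?_
    rw [Nat.cast_zero, zero_mul]
    exact zero_le_one
  | succ k ih =>
    obtain ⟨b, hb, hbsum⟩ := s.exists_hasSum_transferL1 hz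
    obtain ⟨c, hc, hcsum⟩ := s.exists_hasSum_transferL1 (ae_eq_refl e)
    have hcG (j : J) : c j ∈ G := hbranch j e he (c j) (hc j)
    have hbc (j : J) : b j =ᵐ[s.μ] fun x => v (s.inverseBranch j x) * c j x := by
      filter_upwards [hb j, hc j] with x hbx hcx
      rw [hbx, hcx]
      exact mul_left_comm _ _ _
    have hnorm : HasSum (fun j => ω * ‖c j‖) (ω * ‖e‖) := by
      rw [← s.isMarkovOperator_transferL1.norm_map (hG e he)]
      exact (hasSum_norm_of_nonneg hcsum fun j => hG _ (hcG j)).mul_left ω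
    rw [pow_succ, mul_apply_eq_comp]
    refine le_hasSum_of_subadditive (Metric.continuous_infDist_pt _)
      (Metric.infDist_zero_of_mem C.zero_mem).le (infDist_pointedCone_add_le C)
      ((s.transferL1 ^ k).hasSum hbsum) hnorm fun j => ?_
    refine ih (hcG j) (hbc j) (fun x hx => hv0 _ (s.mapsTo_inverseBranch j hx))
      fun x hx y hy hxy => ?_
    refine hv _ (s.mapsTo_inverseBranch j hx) _ (s.mapsTo_inverseBranch j hy) ?_
    rw [Nat.cast_succ]
    exact s.add_one_mul_abs_inverseBranch_sub_le_one j hx hy k.cast_nonneg hxy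

theorem tendsto_infDist_pow_transferL1 {e z : Lp ℝ 1 s.μ} (he : e ∈ G) {v : ℝ → ℝ}
    (hz : z =ᵐ[s.μ] fun x => v x * e x) (hv0 : ∀ x, 0 ≤ v x) (hv : UniformContinuous v) :
    Tendsto (fun k : ℕ => Metric.infDist ((s.transferL1 ^ k) z) C) atTop (𝓝 0) := by
  rw [Metric.tendsto_atTop]
  intro δ hδ
  obtain ⟨ω, hω, hωδ⟩ : ∃ ω > 0, ω * ‖e‖ < δ :=
    ⟨δ / (‖e‖ + 1), by positivity, by
      rw [div_mul_eq_mul_div, div_lt_iff₀ (by positivity)]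
      exact mul_lt_mul_of_pos_left (lt_add_one _) hδ⟩
  obtain ⟨η, hη, hvη⟩ := Metric.uniformContinuous_iff.1 hv ω hω
  obtain ⟨N, hN⟩ := exists_nat_gt (1 / η)
  refine ⟨N, fun k hk => ?_⟩
  rw [Real.dist_0_eq_abs, abs_of_nonneg Metric.infDist_nonneg]
  refine (s.infDist_pow_transferL1_le hG hGC hbranch k he hz (fun x _ => hv0 x)
    fun x _ y _ hxy => (hvη ?_).le).trans_lt hωδ
  have hkη : 1 < k * η := (div_lt_iff₀ hη).1 (hN.trans_le (Nat.cast_le.2 hk))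
  by_contra! hηxy
  rw [Real.dist_eq] at hηxy
  exact (hkη.trans_le (mul_le_mul_of_nonneg_left hηxy k.cast_nonneg)).not_ge hxy

theorem isAbsorbing_transferL1 {e : Lp ℝ 1 s.μ} (he : e ∈ G) (he1 : e =ᵐ[s.μ] fun _ => 1) :
    IsAbsorbing s.transferL1 (C : Set (Lp ℝ 1 s.μ)) := by
  intro u hu δ hδ
  obtain ⟨z, v, hv, hv0, hz, huz⟩ := exists_uniformContinuous_norm_sub_le hu (half_pos hδ)
  have hze : z =ᵐ[s.μ] fun x => v x * e x := by
    filter_upwards [hz, he1] with x hzx hex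
    rw [hzx, hex, mul_one]
  filter_upwards [(s.tendsto_infDist_pow_transferL1 hG hGC hbranch he hze hv0
    hv).eventually_lt_const (half_pos hδ)] with k hk
  simp only [← dist_eq_norm]
  rw [← Metric.infDist_lt_iff C.nonempty]
  calc Metric.infDist ((s.transferL1 ^ k) u) C
      ≤ Metric.infDist ((s.transferL1 ^ k) z) C + ‖(s.transferL1 ^ k) (u - z)‖ := by
        rw [map_sub, ← dist_eq_norm]
        exact Metric.infDist_le_infDist_add_dist
    _ < δ / 2 + δ / 2 := add_lt_add_of_lt_of_le hk
        ((norm_pow_apply_le s.isMarkovOperator_transferL1.opNorm_le_one k _).trans huz)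
    _ = δ := add_halves δ

end Absorbing

end InversionSystem

section Hull

variable {E : Type*} [NormedAddCommGroup E] [Lattice E] [IsOrderedAddMonoid E] [NormedSpace ℝ E]
  [PosSMulMono ℝ E] {G : Set E}

theorem nonneg_of_mem_hull (hG : ∀ g ∈ G, 0 ≤ g) {g : E} (hg : g ∈ PointedCone.hull ℝ G) : 0 ≤ g :=
  Submodule.span_le (p := PointedCone.positive ℝ E).2 hG hg

theorem norm_smul_le_of_mem_hull [AbstractLSpace E] (hG : ∀ g ∈ G, 0 ≤ g) {e : E}
    (hle : ∀ g ∈ G, ‖g‖ • e ≤ g) {g : E} (hg : g ∈ PointedCone.hull ℝ G) : ‖g‖ • e ≤ g := by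
  induction hg using Submodule.span_induction with
  | mem g hg => exact hle g hg
  | zero => rw [norm_zero, zero_smul]
  | add g h hg hh ihg ihh =>
    rw [AbstractLSpace.norm_add_of_nonneg (nonneg_of_mem_hull hG hg) (nonneg_of_mem_hull hG hh),
      add_smul]
    exact add_le_add ihg ihh
  | smul r g hg ih =>
    rw [Nonneg.mk_smul, norm_smul_of_nonneg r.2, mul_smul]
    exact smul_le_smul_of_nonneg_left ih r.2

theorem le_smul_map_of_mem_hull {T : E →L[ℝ] E} {A : ℝ} (hle : ∀ g ∈ G, g ≤ A • T g) {g : E}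
    (hg : g ∈ PointedCone.hull ℝ G) : g ≤ A • T g := by
  induction hg using Submodule.span_induction with
  | mem g hg => exact hle g hg
  | zero => rw [map_zero, smul_zero]
  | add g h _ _ ihg ihh =>
    rw [map_add, smul_add]
    exact add_le_add ihg ihh
  | smul r g _ ih =>
    rw [Nonneg.mk_smul, map_smul, smul_comm]
    exact smul_le_smul_of_nonneg_left ih r.2

theorem seminorm_sub_norm_smul_eq_zero_of_mem_hull [AbstractLSpace E] (p : Seminorm ℝ E)
    (hG : ∀ g ∈ G, 0 ≤ g) {e : E} (hp : ∀ g ∈ G, p (g - ‖g‖ • e) = 0) {g : E}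
    (hg : g ∈ PointedCone.hull ℝ G) : p (g - ‖g‖ • e) = 0 := by
  induction hg using Submodule.span_induction with
  | mem g hg => exact hp g hg
  | zero => rw [norm_zero, zero_smul, sub_zero, map_zero]
  | add g h hg hh ihg ihh =>
    rw [AbstractLSpace.norm_add_of_nonneg (nonneg_of_mem_hull hG hg) (nonneg_of_mem_hull hG hh),
      add_smul, add_sub_add_comm]
    refine le_antisymm ((map_add_le_add p _ _).trans_eq ?_) (apply_nonneg p _)
    rw [ihg, ihh, add_zero]
  | smul r g _ ih =>
    rw [Nonneg.mk_smul, norm_smul_of_nonneg r.2, mul_smul, ← smul_sub, map_smul_eq_mul, ih,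
      mul_zero]

end Hull

/-- The density `x ↦ 1 / (w x + 1)²`. The inverse branches of an `InversionSystem` permute these
densities up to scalars. -/
noncomputable def mobiusDensity (w x : ℝ) : ℝ := 1 / (w * x + 1) ^ 2

namespace InversionSystem

variable {J : Type*} (s : InversionSystem J)

theorem transferTerm_mul_mobiusDensity {j : J} {w x : ℝ} (hw : s.n j + s.ε * w ≠ 0) (hx : x ∈ s.I)
    (r : ℝ) : s.transferTerm j (fun y => r * mobiusDensity w y) x
      = r / (s.n j + s.ε * w) ^ 2 * mobiusDensity (1 / (s.n j + s.ε * w)) x := by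
  have hne := s.add_ne_zero j hx
  have hbranch : w * s.inverseBranch j x + 1 = (s.n j + s.ε * w + x) / (s.n j + x) := by
    unfold inverseBranch
    field_simp
    ring
  have hdensity : 1 / (s.n j + s.ε * w) * x + 1 = (s.n j + s.ε * w + x) / (s.n j + s.ε * w) := by
    field_simp
    ring
  simp only [transferTerm, mobiusDensity, smul_eq_mul]
  rw [hbranch, hdensity]
  field_simp

/-- The nonnegative multiples of the densities `1 / (w x + 1)²` with `w ∈ W`, as elements of
`L¹`. -/
def mobiusKernels (W : Set ℝ) : Set (Lp ℝ 1 s.μ) :=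
  {z | ∃ r : ℝ, 0 ≤ r ∧ ∃ w ∈ W, z =ᵐ[s.μ] fun x => r * mobiusDensity w x}

variable {W : Set ℝ}

theorem nonneg_of_mem_mobiusKernels {z : Lp ℝ 1 s.μ} (hz : z ∈ s.mobiusKernels W) : 0 ≤ z := by
  obtain ⟨r, hr, w, -, hzw⟩ := hz
  rw [← Lp.coeFn_nonneg]
  filter_upwards [hzw] with x hx
  rw [hx]
  exact mul_nonneg hr (one_div_nonneg.2 (sq_nonneg _))

theorem isAbsorbing_hull_mobiusKernels [Countable J] (hW0 : 0 ∈ W)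
    (hW : ∀ j, ∀ w ∈ W, s.n j + s.ε * w ≠ 0 ∧ 1 / (s.n j + s.ε * w) ∈ W) :
    IsAbsorbing s.transferL1 (PointedCone.hull ℝ (s.mobiusKernels W) : Set (Lp ℝ 1 s.μ)) := by
  have hone : Integrable (fun _ : ℝ => (1 : ℝ)) s.μ := integrable_const 1
  refine s.isAbsorbing_transferL1 (fun g hg => s.nonneg_of_mem_mobiusKernels hg)
    Submodule.subset_span ?_ (e := hone.toL1) ⟨1, zero_le_one, 0, hW0, ?_⟩ hone.coeFn_toL1
  · rintro j g ⟨r, hr, w, hw, hg⟩ b hb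
    obtain ⟨hne, hmem⟩ := hW j w hw
    refine ⟨r / (s.n j + s.ε * w) ^ 2, by positivity, _, hmem, ?_⟩
    filter_upwards [hb, s.ae_transferTerm_congr hg, s.ae_mem] with x hbx hgx hx
    rw [hbx, hgx j, s.transferTerm_mul_mobiusDensity hne hx]
  · refine hone.coeFn_toL1.trans (Eventually.of_forall fun x => ?_)
    norm_num [mobiusDensity]

end InversionSystem

theorem one_add_abs_sub_le_mul {a b u v : ℝ} (ha : 0 ≤ a) (hb : 0 ≤ b) (hu : 1 + a ≤ u)
    (hv : 1 + b ≤ v) : 1 + |a - b| ≤ u * v := by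
  have hab : |a - b| ≤ a + b := abs_le.2 ⟨by linarith, by linarith⟩
  nlinarith [mul_le_mul hu hv (by linarith) (by linarith), mul_nonneg ha hb]

theorem exists_nat_one_div_add_eq {y : ℝ} (hy : y ∈ Set.Ioo (0 : ℝ) 1)
    (hne : ∀ k : ℕ, 1 / (k : ℝ) ≠ y) :
    ∃ k : ℕ, ∃ x ∈ Set.Ioo (0 : ℝ) 1, 1 / ((k : ℝ) + 1 + x) = y := by
  obtain ⟨hy0, hy1⟩ := hy
  have hfloor : ((⌊1 / y⌋₊ : ℕ) : ℝ) ≤ 1 / y := Nat.floor_le (by positivity)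
  have hfloor' := Nat.lt_floor_add_one (1 / y)
  obtain ⟨k, hk⟩ := Nat.exists_eq_add_of_le'
    (Nat.le_floor (Nat.cast_one.trans_le (one_le_one_div hy0 hy1.le)))
  rw [hk] at hfloor hfloor'
  push_cast at hfloor hfloor'
  refine ⟨k, 1 / y - (k + 1), ⟨?_, by linarith⟩, ?_⟩
  · refine lt_of_le_of_ne (by linarith) fun h => hne (k + 1) ?_
    push_cast
    rw [show (k : ℝ) + 1 = 1 / y by linarith, one_div_one_div]
  · rw [add_sub_cancel, one_div_one_div]

/-- The inverse branches `x ↦ 1 / (k + x)`, `k ≥ 1`, of the Gauss map, with index `j = k - 1`. -/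
noncomputable def gaussSystem : InversionSystem ℕ where
  n j := j + 1
  ε := 1
  lo := 0
  hi := 1
  exceptional := Set.range fun k : ℕ => 1 / (k : ℝ)
  lo_lt_hi := one_pos
  abs_ε := abs_one
  mapsTo j x hx := by
    have hx0 := hx.1
    have : (0 : ℝ) ≤ j := j.cast_nonneg
    refine ⟨by positivity, ?_⟩
    rw [div_lt_one (by positivity)]
    linarith
  expanding j x hx y hy := by
    have hx0 := hx.1
    have hy0 := hy.1
    have : (0 : ℝ) ≤ j := j.cast_nonneg
    refine one_add_abs_sub_le_mul hx0.le hy0.le ?_ ?_ <;>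
      exact (le_abs_self _).trans' (by linarith)
  index_unique i j x hx y hy h := by
    obtain ⟨hx0, hx1⟩ := hx
    obtain ⟨hy0, hy1⟩ := hy
    have hij : (i : ℝ) < j + 1 := by linarith
    have hji : (j : ℝ) < i + 1 := by linarith
    norm_cast at hij hji
    omega
  countable_exceptional := Set.countable_range _
  exists_branch y hy hyE := exists_nat_one_div_add_eq hy fun k h => hyE ⟨k, h⟩

namespace gaussSystem

theorem isAbsorbing :
    IsAbsorbing gaussSystem.transferL1
      (PointedCone.hull ℝ (gaussSystem.mobiusKernels (Set.Icc 0 1)) :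
        Set (Lp ℝ 1 gaussSystem.μ)) := by
  refine gaussSystem.isAbsorbing_hull_mobiusKernels ⟨le_rfl, zero_le_one⟩ fun j w hw => ?_
  have hn : 1 ≤ gaussSystem.n j + gaussSystem.ε * w := by
    have : (0 : ℝ) ≤ j := j.cast_nonneg
    simp only [gaussSystem]
    linarith [hw.1]
  have hn0 := one_pos.trans_le hn
  exact ⟨hn0.ne', by positivity, (div_le_one hn0).2 hn⟩

theorem mobiusDensity_mem_Icc {w x : ℝ} (hw : w ∈ Set.Icc (0 : ℝ) 1) (hx : x ∈ gaussSystem.I) :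
    mobiusDensity w x ∈ Set.Icc (1 / 4 : ℝ) 1 := by
  have hx0 : 0 < x := hx.1
  have hx1 : x < 1 := hx.2
  have hwx : 0 ≤ w * x := mul_nonneg hw.1 hx0.le
  have hwx' : w * x ≤ 1 := mul_le_one₀ hw.2 hx0.le hx1.le
  unfold mobiusDensity
  constructor
  · exact one_div_le_one_div_of_le (by positivity) (by nlinarith)
  · exact (div_le_one (by positivity)).2 (by nlinarith)

theorem measureReal_univ : gaussSystem.μ.real Set.univ = 1 := by
  simp [InversionSystem.μ, InversionSystem.I, gaussSystem, Measure.real]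

theorem norm_smul_le_of_mem_mobiusKernels {e z : Lp ℝ 1 gaussSystem.μ}
    (he : e =ᵐ[gaussSystem.μ] fun _ => 1 / 4)
    (hz : z ∈ gaussSystem.mobiusKernels (Set.Icc 0 1)) : ‖z‖ • e ≤ z := by
  have hz0 := gaussSystem.nonneg_of_mem_mobiusKernels hz
  obtain ⟨r, hr, w, hw, hzw⟩ := hz
  have hnorm : ‖z‖ ≤ r := by
    rw [L1_norm_eq_integral_of_nonneg hz0]
    calc ∫ x, z x ∂gaussSystem.μ ≤ ∫ _, r ∂gaussSystem.μ := by
          refine integral_mono_ae (L1.integrable_coeFn z) (integrable_const _) ?_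
          filter_upwards [hzw, gaussSystem.ae_mem] with x hx hxI
          rw [hx]
          exact mul_le_of_le_one_right hr (mobiusDensity_mem_Icc hw hxI).2
      _ = r := by rw [integral_const, measureReal_univ, one_smul]
  rw [← Lp.coeFn_le]
  filter_upwards [hzw, he, Lp.coeFn_smul ‖z‖ e, gaussSystem.ae_mem] with x hx hex hsmul hxI
  rw [hsmul, Pi.smul_apply, hex, hx]
  exact mul_le_mul hnorm (mobiusDensity_mem_Icc hw hxI).1 (by norm_num) hr

theorem asymptoticSeminorm_eq_zero {z : Lp ℝ 1 gaussSystem.μ} (hz : ‖z⁺‖ = ‖z⁻‖) :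
    asymptoticSeminorm gaussSystem.isMarkovOperator_transferL1.opNorm_le_one z = 0 := by
  have he : Integrable (fun _ : ℝ => (1 / 4 : ℝ)) gaussSystem.μ := integrable_const _
  have he0 : 0 ≤ he.toL1 := by
    rw [← Lp.coeFn_nonneg]
    filter_upwards [he.coeFn_toL1] with x hx
    rw [hx]
    norm_num
  have hnorm : ‖he.toL1‖ = 1 / 4 := by
    rw [L1_norm_eq_integral_of_nonneg he0, integral_congr_ae he.coeFn_toL1, integral_const,
      measureReal_univ, one_smul]
  refine gaussSystem.isMarkovOperator_transferL1.asymptoticSeminorm_eq_zero_of_norm_smul_le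
    isAbsorbing he0 (fun g hg => norm_smul_le_of_mem_hull
      (fun g hg => gaussSystem.nonneg_of_mem_mobiusKernels hg)
      (fun g hg => norm_smul_le_of_mem_mobiusKernels he.coeFn_toL1 hg) hg) hz fun h => ?_
  rw [h, norm_zero] at hnorm
  norm_num at hnorm

end gaussSystem

theorem two_add_le_abs_two_mul_add {j : ℤ} (hj : 0 < j) (x : ℝ) : 2 + x ≤ |2 * (j : ℝ) + x| := by
  have : (1 : ℝ) ≤ j := mod_cast hj
  exact (le_abs_self _).trans' (by linarith)

theorem two_sub_le_abs_two_mul_add {j : ℤ} (hj : j < 0) (x : ℝ) : 2 - x ≤ |2 * (j : ℝ) + x| := by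
  have : (j : ℝ) ≤ -1 := mod_cast Int.le_sub_one_of_lt hj
  exact (neg_le_abs _).trans' (by linarith)

theorem one_lt_abs_two_mul_add {j : ℤ} (hj : j ≠ 0) {x : ℝ} (hx : |x| < 1) :
    1 < |2 * (j : ℝ) + x| := by
  obtain ⟨hx1, hx2⟩ := abs_lt.1 hx
  rcases hj.lt_or_gt with hj | hj
  · linarith [two_sub_le_abs_two_mul_add hj x]
  · linarith [two_add_le_abs_two_mul_add hj x]

theorem one_add_abs_sub_le_abs_two_mul_add_mul {j : ℤ} (hj : j ≠ 0) {x y : ℝ}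
    (hx : x ∈ Set.Ioo (-1 : ℝ) 1) (hy : y ∈ Set.Ioo (-1 : ℝ) 1) :
    1 + |x - y| ≤ |2 * (j : ℝ) + x| * |2 * (j : ℝ) + y| := by
  obtain ⟨hx1, hx2⟩ := hx
  obtain ⟨hy1, hy2⟩ := hy
  rcases hj.lt_or_gt with hj | hj
  · rw [show x - y = (1 - y) - (1 - x) by ring, abs_sub_comm]
    exact one_add_abs_sub_le_mul (by linarith) (by linarith)
      ((two_sub_le_abs_two_mul_add hj x).trans' (by linarith))
      ((two_sub_le_abs_two_mul_add hj y).trans' (by linarith))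
  · rw [← add_sub_add_left_eq_sub x y 1]
    exact one_add_abs_sub_le_mul (by linarith) (by linarith)
      ((two_add_le_abs_two_mul_add hj x).trans' (by linarith))
      ((two_add_le_abs_two_mul_add hj y).trans' (by linarith))

theorem exists_int_neg_one_div_two_mul_add_eq {y : ℝ} (hy : y ∈ Set.Ioo (-1 : ℝ) 1)
    (hne : ∀ k : ℤ, -1 / (k : ℝ) ≠ y) :
    ∃ k : ℤ, k ≠ 0 ∧ ∃ x ∈ Set.Ioo (-1 : ℝ) 1, -1 / (2 * (k : ℝ) + x) = y := by
  have hy0 : y ≠ 0 := fun h => hne 0 (by rw [h, Int.cast_zero, div_zero])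
  set t := -1 / y with ht
  have hty : -1 / t = y := by rw [ht, div_div_cancel₀ (by norm_num)]
  have htabs : 1 < |t| := by
    rw [ht, abs_div, abs_neg, abs_one, one_lt_div (abs_pos.2 hy0)]
    exact abs_lt.2 hy
  have hfloor := Int.floor_le ((t + 1) / 2)
  have hfloor' := Int.lt_floor_add_one ((t + 1) / 2)
  set k := ⌊(t + 1) / 2⌋
  have hlo : -1 < t - 2 * (k : ℝ) := by
    refine lt_of_le_of_ne (by linarith) fun h => hne (2 * k - 1) ?_
    push_cast
    rw [← hty, show 2 * (k : ℝ) - 1 = t by linarith]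
  have hhi : t - 2 * (k : ℝ) < 1 := by linarith
  have hk0 : k ≠ 0 := by
    intro h
    rw [h, Int.cast_zero, mul_zero, sub_zero] at hlo hhi
    exact (abs_lt.2 ⟨hlo, hhi⟩).not_gt htabs
  exact ⟨k, hk0, t - 2 * (k : ℝ), ⟨hlo, hhi⟩, by rw [add_sub_cancel, hty]⟩

/-- The inverse branches `x ↦ -1 / (2 j + x)`, `j ≠ 0`, of the Gauss-type map on `(-1, 1)`. -/
noncomputable def evenSystem : InversionSystem {j : ℤ // j ≠ 0} where
  n j := 2 * ((j : ℤ) : ℝ)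
  ε := -1
  lo := -1
  hi := 1
  exceptional := Set.range fun k : ℤ => -1 / (k : ℝ)
  lo_lt_hi := by norm_num
  abs_ε := by norm_num
  mapsTo j x hx := by
    have h := one_lt_abs_two_mul_add j.2 (abs_lt.2 hx)
    rw [Set.mem_Ioo, ← abs_lt, abs_div, abs_neg, abs_one, div_lt_one (by linarith)]
    exact h
  expanding j _ hx _ hy := one_add_abs_sub_le_abs_two_mul_add_mul j.2 hx hy
  index_unique i j x hx y hy h := by
    obtain ⟨hx1, hx2⟩ := hx
    obtain ⟨hy1, hy2⟩ := hy
    have hij : ((i : ℤ) : ℝ) < (j : ℤ) + 1 := by linarith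
    have hji : ((j : ℤ) : ℝ) < (i : ℤ) + 1 := by linarith
    norm_cast at hij hji
    exact Subtype.ext (by omega)
  countable_exceptional := Set.countable_range _
  exists_branch y hy hyE := by
    obtain ⟨k, hk, h⟩ := exists_int_neg_one_div_two_mul_add_eq hy fun k h => hyE ⟨k, h⟩
    exact ⟨⟨k, hk⟩, h⟩

/-- The probability density on `(-1, 1)` proportional to `mobiusDensity w`. -/
noncomputable def evenDensity (w x : ℝ) : ℝ := (1 - w ^ 2) / 2 * mobiusDensity w x

/-- The density `evenDensity w` as an element of `L¹(-1, 1)`. It is used for `|w| < 1` only, and is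
set to `0` otherwise. -/
noncomputable def evenKernel (w : ℝ) : Lp ℝ 1 evenSystem.μ :=
  open Classical in
  if h : Integrable (evenDensity w) evenSystem.μ then h.toL1 else 0

/-- The mass which the branch of index `j` transports from `evenKernel w` to
`evenKernel (1 / (2 j - w))`. -/
noncomputable def evenWeight (j : ℤ) (w : ℝ) : ℝ := (1 - w ^ 2) / ((2 * j - w) ^ 2 - 1)

section EvenKernel

variable {w : ℝ}

theorem mul_add_one_pos (hw : |w| < 1) {x : ℝ} (hx : x ∈ Set.Icc (-1 : ℝ) 1) :
    0 < w * x + 1 := by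
  have hwx : |w * x| < 1 := by
    rw [abs_mul]
    exact mul_lt_one_of_nonneg_of_lt_one_left (abs_nonneg w) hw (abs_le.2 hx)
  linarith [(abs_lt.1 hwx).1]

theorem one_sub_sq_pos (hw : |w| < 1) : 0 < 1 - w ^ 2 :=
  sub_pos.2 ((sq_lt_one_iff_abs_lt_one w).2 hw)

theorem continuousOn_evenDensity (hw : |w| < 1) :
    ContinuousOn (evenDensity w) (Set.Icc (-1 : ℝ) 1) := by
  unfold evenDensity mobiusDensity
  exact continuousOn_const.mul (continuousOn_const.div (by fun_prop) fun x hx =>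
    pow_ne_zero 2 (mul_add_one_pos hw hx).ne')

theorem integrable_evenDensity (hw : |w| < 1) : Integrable (evenDensity w) evenSystem.μ :=
  (continuousOn_evenDensity hw).integrableOn_Icc.mono_set Set.Ioo_subset_Icc_self

theorem hasDerivAt_evenDensity_primitive {x : ℝ} (hx : w * x + 1 ≠ 0) :
    HasDerivAt (fun x => (1 - w ^ 2) / 2 * (x / (w * x + 1))) (evenDensity w x) x := by
  refine HasDerivAt.congr_deriv (((hasDerivAt_id' x).fun_div
    (((hasDerivAt_id' x).const_mul w).add_const 1) hx).const_mul ((1 - w ^ 2) / 2)) ?_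
  unfold evenDensity mobiusDensity
  congr 2
  ring

theorem integral_evenDensity (hw : |w| < 1) : ∫ x, evenDensity w x ∂evenSystem.μ = 1 := by
  have huIcc : Set.uIcc (-1 : ℝ) 1 = Set.Icc (-1) 1 := Set.uIcc_of_le (by norm_num)
  have hright := (mul_add_one_pos hw (x := 1) (by norm_num)).ne'
  have hleft := (mul_add_one_pos hw (x := -1) (by norm_num)).ne'
  calc ∫ x, evenDensity w x ∂evenSystem.μ = ∫ x in (-1 : ℝ)..1, evenDensity w x := by
        rw [intervalIntegral.integral_of_le (by norm_num), integral_Ioc_eq_integral_Ioo]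
        rfl
    _ = (1 - w ^ 2) / 2 * (1 / (w * 1 + 1)) - (1 - w ^ 2) / 2 * (-1 / (w * -1 + 1)) := by
        refine intervalIntegral.integral_eq_sub_of_hasDerivAt
          (f := fun x => (1 - w ^ 2) / 2 * (x / (w * x + 1))) (fun x hx => ?_) ?_
        · exact hasDerivAt_evenDensity_primitive (mul_add_one_pos hw (huIcc ▸ hx)).ne'
        · exact ContinuousOn.intervalIntegrable (huIcc ▸ continuousOn_evenDensity hw)
    _ = 1 := by
        rw [← mul_sub, div_sub_div _ _ hright hleft, div_mul_div_comm,
          div_eq_one_iff_eq (mul_ne_zero two_ne_zero (mul_ne_zero hright hleft))]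
        ring

theorem coeFn_evenKernel (hw : |w| < 1) : evenKernel w =ᵐ[evenSystem.μ] evenDensity w := by
  rw [evenKernel, dif_pos (integrable_evenDensity hw)]
  exact Integrable.coeFn_toL1 _

theorem evenKernel_nonneg (hw : |w| < 1) : 0 ≤ evenKernel w := by
  rw [← Lp.coeFn_nonneg]
  filter_upwards [coeFn_evenKernel hw] with x hx
  rw [hx]
  exact mul_nonneg (half_pos (one_sub_sq_pos hw)).le (one_div_nonneg.2 (sq_nonneg _))

theorem norm_evenKernel (hw : |w| < 1) : ‖evenKernel w‖ = 1 := by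
  rw [L1_norm_eq_integral_of_nonneg (evenKernel_nonneg hw), integral_congr_ae (coeFn_evenKernel hw),
    integral_evenDensity hw]

theorem one_lt_abs_two_mul_sub (hw : |w| < 1) {j : ℤ} (hj : j ≠ 0) : 1 < |2 * (j : ℝ) - w| :=
  one_lt_abs_two_mul_add hj ((abs_neg w).trans_lt hw)

theorem two_mul_sub_ne_zero (hw : |w| < 1) {j : ℤ} (hj : j ≠ 0) : 2 * (j : ℝ) - w ≠ 0 :=
  abs_pos.1 (one_pos.trans (one_lt_abs_two_mul_sub hw hj))

theorem abs_one_div_two_mul_sub_lt_one (hw : |w| < 1) {j : ℤ} (hj : j ≠ 0) :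
    |1 / (2 * (j : ℝ) - w)| < 1 := by
  have := one_lt_abs_two_mul_sub hw hj
  rwa [abs_div, abs_one, div_lt_one (by linarith)]

theorem two_mul_sub_sq_sub_one_pos (hw : |w| < 1) {j : ℤ} (hj : j ≠ 0) :
    0 < (2 * (j : ℝ) - w) ^ 2 - 1 :=
  sub_pos.2 ((one_lt_sq_iff_one_lt_abs _).2 (one_lt_abs_two_mul_sub hw hj))

theorem evenWeight_pos (hw : |w| < 1) {j : ℤ} (hj : j ≠ 0) : 0 < evenWeight j w :=
  div_pos (one_sub_sq_pos hw) (two_mul_sub_sq_sub_one_pos hw hj)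

theorem evenWeight_neg_neg (j : ℤ) (w : ℝ) : evenWeight (-j) (-w) = evenWeight j w := by
  unfold evenWeight
  push_cast
  ring_nf

theorem transferTerm_evenDensity (hw : |w| < 1) (j : {j : ℤ // j ≠ 0}) {x : ℝ}
    (hx : x ∈ evenSystem.I) : evenSystem.transferTerm j (evenDensity w) x
      = evenWeight j w * evenDensity (1 / (2 * ((j : ℤ) : ℝ) - w)) x := by
  have hden := two_mul_sub_ne_zero hw j.2
  have hsq := (two_mul_sub_sq_sub_one_pos hw j.2).ne'
  have hparam : evenSystem.n j + evenSystem.ε * w = 2 * ((j : ℤ) : ℝ) - w := by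
    simp only [evenSystem]
    ring
  have hcoeff : (1 - w ^ 2) / 2 / (2 * ((j : ℤ) : ℝ) - w) ^ 2
      = evenWeight j w * ((1 - (1 / (2 * ((j : ℤ) : ℝ) - w)) ^ 2) / 2) := by
    unfold evenWeight
    field_simp
  have hterm := evenSystem.transferTerm_mul_mobiusDensity (hparam ▸ hden) hx ((1 - w ^ 2) / 2)
  rwa [hparam, hcoeff, mul_assoc] at hterm

theorem hasSum_transferL1_evenKernel (hw : |w| < 1) :
    HasSum (fun j : {j : ℤ // j ≠ 0} => evenWeight j w • evenKernel (1 / (2 * ((j : ℤ) : ℝ) - w)))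
      (evenSystem.transferL1 (evenKernel w)) := by
  obtain ⟨b, hb, hsum⟩ := evenSystem.exists_hasSum_transferL1 (coeFn_evenKernel hw)
  convert hsum using 1
  funext j
  refine Lp.ext ?_
  filter_upwards [hb j, Lp.coeFn_smul (evenWeight j w) (evenKernel (1 / (2 * ((j : ℤ) : ℝ) - w))),
    coeFn_evenKernel (abs_one_div_two_mul_sub_lt_one hw j.2), evenSystem.ae_mem]
    with x hbx hsmul hkernel hx
  rw [hbx, hsmul, Pi.smul_apply, hkernel, smul_eq_mul, transferTerm_evenDensity hw j hx]

theorem hasSum_evenWeight (hw : |w| < 1) :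
    HasSum (fun j : {j : ℤ // j ≠ 0} => evenWeight j w) 1 := by
  have hkernel (j : {j : ℤ // j ≠ 0}) := abs_one_div_two_mul_sub_lt_one hw j.2
  have hpos (j : {j : ℤ // j ≠ 0}) := (evenWeight_pos hw j.2).le
  have := hasSum_norm_of_nonneg (hasSum_transferL1_evenKernel hw) fun j =>
    smul_nonneg (hpos j) (evenKernel_nonneg (hkernel j))
  rw [evenSystem.isMarkovOperator_transferL1.norm_map (evenKernel_nonneg hw),
    norm_evenKernel hw] at this
  simpa only [norm_smul_of_nonneg (hpos _), norm_evenKernel (hkernel _), mul_one] using this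

theorem evenDensity_le_nine_mul (hw : |w| < 1) : ∃ j : {j : ℤ // j ≠ 0}, ∀ x ∈ evenSystem.I,
    evenDensity w x ≤ 9 * evenSystem.transferTerm j (evenDensity w) x := by
  obtain ⟨hw1, hw2⟩ := abs_lt.1 hw
  obtain ⟨j, hj⟩ : ∃ j : {j : ℤ // j ≠ 0}, ∀ x ∈ evenSystem.I,
      |2 * ((j : ℤ) : ℝ) + x - w| ≤ 3 * (w * x + 1) := by
    rcases le_total 0 w with h0 | h0
    · refine ⟨⟨1, one_ne_zero⟩, fun x ⟨(hx1 : -1 < x), (hx2 : x < 1)⟩ => ?_⟩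
      push_cast
      rw [abs_of_nonneg (by linarith)]
      nlinarith
    · refine ⟨⟨-1, by norm_num⟩, fun x ⟨(hx1 : -1 < x), (hx2 : x < 1)⟩ => ?_⟩
      push_cast
      rw [abs_of_nonpos (by linarith)]
      nlinarith
  refine ⟨j, fun x hx => ?_⟩
  have hpos := mul_add_one_pos hw (Set.Ioo_subset_Icc_self hx)
  have hne : 2 * ((j : ℤ) : ℝ) + x ≠ 0 := evenSystem.add_ne_zero j hx
  have hne' : 2 * ((j : ℤ) : ℝ) + x - w ≠ 0 := by
    intro h
    have := one_lt_abs_two_mul_sub hw j.2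
    rw [show 2 * ((j : ℤ) : ℝ) - w = -x by linarith, abs_neg] at this
    exact this.not_gt (abs_lt.2 hx)
  have hterm : evenSystem.transferTerm j (evenDensity w) x
      = (1 - w ^ 2) / 2 * (1 / (2 * ((j : ℤ) : ℝ) + x - w) ^ 2) := by
    have hshift : w * (-1 / (2 * ((j : ℤ) : ℝ) + x)) + 1
        = (2 * ((j : ℤ) : ℝ) + x - w) / (2 * ((j : ℤ) : ℝ) + x) := by
      field_simp
      ring
    simp only [InversionSystem.transferTerm, InversionSystem.inverseBranch, evenDensity,
      mobiusDensity, evenSystem, smul_eq_mul]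
    rw [hshift]
    field_simp
  have hsq := sq_le_sq.2 ((hj x hx).trans (le_abs_self _))
  rw [hterm, mul_left_comm]
  refine mul_le_mul_of_nonneg_left ?_ (half_pos (one_sub_sq_pos hw)).le
  rw [mobiusDensity, mul_one_div, div_le_div_iff₀ (by positivity) (by positivity)]
  linarith

theorem evenKernel_le_nine_smul (hw : |w| < 1) :
    evenKernel w ≤ (9 : ℝ) • evenSystem.transferL1 (evenKernel w) := by
  obtain ⟨j, hj⟩ := evenDensity_le_nine_mul hw
  have hnonneg (i : {j : ℤ // j ≠ 0}) :
      0 ≤ evenWeight i w • evenKernel (1 / (2 * ((i : ℤ) : ℝ) - w)) :=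
    smul_nonneg (evenWeight_pos hw i.2).le
      (evenKernel_nonneg (abs_one_div_two_mul_sub_lt_one hw i.2))
  refine le_trans ?_ (smul_le_smul_of_nonneg_left (le_hasSum (hasSum_transferL1_evenKernel hw) j
    fun i _ => hnonneg i) (by norm_num))
  rw [smul_smul, ← Lp.coeFn_le]
  filter_upwards [coeFn_evenKernel hw, evenSystem.ae_mem,
    Lp.coeFn_smul (9 * evenWeight j w) (evenKernel (1 / (2 * ((j : ℤ) : ℝ) - w))),
    coeFn_evenKernel (abs_one_div_two_mul_sub_lt_one hw j.2)] with x hkernel hx hsmul hbranch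
  rw [hkernel, hsmul, Pi.smul_apply, hbranch, smul_eq_mul, mul_assoc,
    ← transferTerm_evenDensity hw j hx]
  exact hj x hx

end EvenKernel

/-- The limit of the `L¹` distance between the orbits of the densities `evenKernel w` and
`evenKernel 0` under the transfer operator. -/
noncomputable def evenGap (w : ℝ) : ℝ :=
  asymptoticSeminorm evenSystem.isMarkovOperator_transferL1.opNorm_le_one
    (evenKernel w - evenKernel 0)

section EvenSeminorm

variable {w : ℝ}

theorem exists_eq_smul_evenKernel {z : Lp ℝ 1 evenSystem.μ}
    (hz : z ∈ evenSystem.mobiusKernels {w | |w| < 1}) :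
    ∃ r : ℝ, 0 ≤ r ∧ ∃ w, |w| < 1 ∧ z = r • evenKernel w := by
  obtain ⟨r, hr, w, hw, hzw⟩ := hz
  have hpos := one_sub_sq_pos hw
  refine ⟨r / ((1 - w ^ 2) / 2), by positivity, w, hw, Lp.ext ?_⟩
  filter_upwards [hzw, Lp.coeFn_smul (r / ((1 - w ^ 2) / 2)) (evenKernel w), coeFn_evenKernel hw]
    with x hx hsmul hkernel
  rw [hx, hsmul, Pi.smul_apply, hkernel, smul_eq_mul, evenDensity, ← mul_assoc,
    div_mul_cancel₀ r (by positivity)]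

theorem evenSystem.isAbsorbing : IsAbsorbing evenSystem.transferL1 (PointedCone.hull ℝ
    (evenSystem.mobiusKernels {w | |w| < 1}) : Set (Lp ℝ 1 evenSystem.μ)) := by
  refine evenSystem.isAbsorbing_hull_mobiusKernels (by simp) fun j w hw => ?_
  have hparam : evenSystem.n j + evenSystem.ε * w = 2 * ((j : ℤ) : ℝ) - w := by
    simp only [evenSystem]
    ring
  rw [hparam]
  exact ⟨two_mul_sub_ne_zero hw j.2, abs_one_div_two_mul_sub_lt_one hw j.2⟩

theorem evenSystem.asymptoticSeminorm_sub_transferL1_eq_zero (f : Lp ℝ 1 evenSystem.μ) :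
    asymptoticSeminorm evenSystem.isMarkovOperator_transferL1.opNorm_le_one
      (f - evenSystem.transferL1 f) = 0 := by
  refine evenSystem.isMarkovOperator_transferL1.asymptoticSeminorm_sub_map_eq_zero (A := 9)
    (by norm_num) evenSystem.isAbsorbing
    (fun g hg => nonneg_of_mem_hull (fun g => evenSystem.nonneg_of_mem_mobiusKernels) hg)
    (fun g hg => le_smul_map_of_mem_hull (fun g hg => ?_) hg) f
  obtain ⟨r, hr, w, hw, rfl⟩ := exists_eq_smul_evenKernel hg
  rw [map_smul, smul_comm]
  exact smul_le_smul_of_nonneg_left (evenKernel_le_nine_smul hw) hr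

theorem evenGap_nonneg (w : ℝ) : 0 ≤ evenGap w := apply_nonneg _ _

theorem smul_evenKernel_zero_le (hw : |w| < 1) :
    ((1 - |w|) / (1 + |w|)) • evenKernel 0 ≤ evenKernel w := by
  have hw0 := abs_nonneg w
  rw [← Lp.coeFn_le]
  filter_upwards [Lp.coeFn_smul ((1 - |w|) / (1 + |w|)) (evenKernel 0), coeFn_evenKernel hw,
    coeFn_evenKernel (w := 0) (by norm_num), evenSystem.ae_mem] with x hsmul hkernel hkernel0 hx
  have hpos := mul_add_one_pos hw (Set.Ioo_subset_Icc_self hx)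
  have hle : w * x + 1 ≤ 1 + |w| := by
    have hwx : |w * x| ≤ |w| := by
      rw [abs_mul]
      exact mul_le_of_le_one_right hw0 (abs_le.2 (Set.Ioo_subset_Icc_self hx))
    linarith [le_abs_self (w * x)]
  rw [hsmul, Pi.smul_apply, hkernel, hkernel0, smul_eq_mul]
  calc (1 - |w|) / (1 + |w|) * evenDensity 0 x
      = (1 - |w| ^ 2) / 2 * (1 / (1 + |w|) ^ 2) := by
        unfold evenDensity mobiusDensity
        field_simp
        ring
    _ ≤ evenDensity w x := by
        rw [sq_abs]
        unfold evenDensity mobiusDensity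
        have := (one_sub_sq_pos hw).le
        gcongr

theorem evenGap_le (hw : |w| < 1) : evenGap w ≤ 4 * |w| := by
  have hw0 := abs_nonneg w
  have h0 : |(0 : ℝ)| < 1 := by norm_num
  set l := (1 - |w|) / (1 + |w|) with hl
  have hl0 : 0 ≤ l := div_nonneg (by linarith) (by linarith)
  have hl1 : l ≤ 1 := div_le_one_of_le₀ (by linarith) (by linarith)
  have hl2 : 1 - 2 * |w| ≤ l := by
    rw [hl, le_div_iff₀ (by linarith)]
    nlinarith
  have hK0 := evenKernel_nonneg h0
  have hnorm := norm_sub_le_of_nonneg_of_le (smul_nonneg hl0 hK0) (smul_evenKernel_zero_le hw)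
    (smul_le_of_le_one_left hK0 hl1)
  rw [norm_evenKernel hw, norm_evenKernel h0, norm_smul_of_nonneg hl0, norm_evenKernel h0] at hnorm
  exact (asymptoticSeminorm_le_norm _ _).trans (by linarith)

theorem evenGap_le_of_hasSum (hw : |w| < 1) {S : ℝ}
    (hS : HasSum (fun j : {j : ℤ // j ≠ 0} =>
      evenWeight j w * evenGap (1 / (2 * ((j : ℤ) : ℝ) - w))) S) : evenGap w ≤ S := by
  set p := asymptoticSeminorm evenSystem.isMarkovOperator_transferL1.opNorm_le_one with hp
  have hsum : HasSum (fun j : {j : ℤ // j ≠ 0} =>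
      evenWeight j w • (evenKernel (1 / (2 * ((j : ℤ) : ℝ) - w)) - evenKernel 0))
      (evenSystem.transferL1 (evenKernel w) - evenKernel 0) := by
    simpa only [smul_sub, one_smul] using
      (hasSum_transferL1_evenKernel hw).sub ((hasSum_evenWeight hw).smul_const (evenKernel 0))
  have htail : p (evenSystem.transferL1 (evenKernel w) - evenKernel 0) ≤ S :=
    le_hasSum_of_subadditive (continuous_asymptoticSeminorm _) (map_zero p).le
      (map_add_le_add p) hsum hS fun j => by
        rw [map_smul_eq_mul, Real.norm_of_nonneg (evenWeight_pos hw j.2).le, evenGap]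
  calc evenGap w = p ((evenKernel w - evenSystem.transferL1 (evenKernel w))
        + (evenSystem.transferL1 (evenKernel w) - evenKernel 0)) := by rw [sub_add_sub_cancel]; rfl
    _ ≤ p (evenKernel w - evenSystem.transferL1 (evenKernel w))
        + p (evenSystem.transferL1 (evenKernel w) - evenKernel 0) := map_add_le_add p _ _
    _ ≤ S := by rwa [hp, evenSystem.asymptoticSeminorm_sub_transferL1_eq_zero, zero_add]

end EvenSeminorm

/-- Nonnegative functions on `(-1, 1)` which are superharmonic for the Markov chain moving from `w`
to `1 / (2 j - w)` with probability `evenWeight j w`. Superharmonicity is expressed by finite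
partial sums, so that no summability is involved. -/
structure IsEvenSuperharmonic (F : ℝ → ℝ) : Prop where
  nonneg : ∀ ⦃w : ℝ⦄, |w| < 1 → 0 ≤ F w
  sum_le : ∀ ⦃w : ℝ⦄, |w| < 1 → ∀ t : Finset ℤ, 0 ∉ t →
    ∑ j ∈ t, evenWeight j w * F (1 / (2 * j - w)) ≤ F w

/-- The rescaled function `(H t - β / 2) / (2 t - 1)` decreases along the orbit `t ↦ t + 1`, and it
is bounded below by a quantity tending to `0`. -/
theorem half_le_of_parabolic_superharmonic {H : ℝ → ℝ} {β : ℝ} (hβ : 0 ≤ β)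
    (hH : ∀ t ≥ 1, 0 ≤ H t)
    (hstep : ∀ t ≥ 1, (2 * t - 1) / (2 * t + 1) * H (t + 1) + β / t ≤ H t) {t : ℝ} (ht : 1 ≤ t) :
    β / 2 ≤ H t := by
  set E : ℝ → ℝ := fun t => (H t - β / 2) / (2 * t - 1) with hE
  have hEstep (r : ℝ) (hr : 1 ≤ r) : E (r + 1) ≤ E r := by
    have hsource : β / 2 ≤ (2 * r - 1) / (2 * r + 1) * (β / 2) + β / r := by
      calc β / 2 = (2 * r - 1) / (2 * r + 1) * (β / 2) + β / (2 * r + 1) := by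
            field_simp
            ring
        _ ≤ (2 * r - 1) / (2 * r + 1) * (β / 2) + β / r := by
            gcongr
            linarith
    simp only [hE]
    rw [le_div_iff₀ (by linarith), show 2 * (r + 1) - 1 = 2 * r + 1 by ring]
    calc (H (r + 1) - β / 2) / (2 * r + 1) * (2 * r - 1)
        = (2 * r - 1) / (2 * r + 1) * H (r + 1) - (2 * r - 1) / (2 * r + 1) * (β / 2) := by ring
      _ ≤ H r - β / 2 := by linarith [hstep r hr]
  have hEorbit (k : ℕ) : E (t + k) ≤ E t := by
    induction k with
    | zero => simp
    | succ k ih =>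
      rw [Nat.cast_add_one, ← add_assoc]
      exact (hEstep _ (by linarith [k.cast_nonneg (α := ℝ)])).trans ih
  have hElower (k : ℕ) : -(β / 2) / (2 * (t + k) - 1) ≤ E t := by
    have hk : 1 ≤ t + k := by linarith [k.cast_nonneg (α := ℝ)]
    refine le_trans ?_ (hEorbit k)
    exact div_le_div_of_nonneg_right (by linarith [hH _ hk]) (by linarith)
  have hlim : Tendsto (fun k : ℕ => -(β / 2) / (2 * (t + k) - 1)) atTop (𝓝 0) :=
    tendsto_const_nhds.div_atTop (tendsto_atTop_add_const_right _ _
      ((tendsto_atTop_add_const_left _ t tendsto_natCast_atTop_atTop).const_mul_atTop two_pos))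
  have hE0 : 0 ≤ E t := le_of_tendsto' hlim hElower
  simpa only [zero_mul, sub_nonneg] using (le_div_iff₀ (by linarith)).1 hE0

theorem evenWeight_one_parabolic {t : ℝ} (ht : 1 ≤ t) :
    evenWeight 1 (1 - 1 / t) = (2 * t - 1) / (2 * t + 1) := by
  have hnum : 1 - (1 - 1 / t) ^ 2 = (2 * t - 1) / t ^ 2 := by
    field_simp
    ring
  have hden : (2 * ((1 : ℤ) : ℝ) - (1 - 1 / t)) ^ 2 - 1 = (2 * t + 1) / t ^ 2 := by
    push_cast
    field_simp
    ring
  rw [evenWeight, hnum, hden, div_div_div_cancel_right₀ (by positivity)]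

theorem div_le_evenWeight_parabolic {J : ℕ} (hJ : 2 ≤ J) {t : ℝ} (ht : 1 ≤ t) :
    1 / (4 * J ^ 2) / t ≤ evenWeight J (1 - 1 / t) := by
  have hJ' : (2 : ℝ) ≤ J := mod_cast hJ
  have ht0 : 0 < 1 / t := by positivity
  have ht1 : 1 / t ≤ 1 := (div_le_one (by linarith)).2 ht
  rw [div_right_comm, evenWeight, Int.cast_natCast]
  exact div_le_div₀ (by nlinarith) (by nlinarith) (by nlinarith) (by nlinarith)

namespace IsEvenSuperharmonic

variable {F : ℝ → ℝ} (hF : IsEvenSuperharmonic F)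

include hF

theorem comp_neg : IsEvenSuperharmonic fun w => F (-w) where
  nonneg w hw := hF.nonneg ((abs_neg w).trans_lt hw)
  sum_le w hw t ht := by
    refine (hF.sum_le ((abs_neg w).trans_lt hw) (t.map (Equiv.neg ℤ).toEmbedding)
      (by simpa using ht)).trans' (le_of_eq ?_)
    rw [Finset.sum_map]
    refine Finset.sum_congr rfl fun j _ => ?_
    rw [Equiv.coe_toEmbedding, Equiv.neg_apply, evenWeight_neg_neg, ← div_neg]
    push_cast
    ring_nf

theorem parabolic_step {δ : ℝ} {J : ℕ} (hJ : 2 ≤ J) (hδ : ∀ w, |w| ≤ 1 / (J : ℝ) → δ ≤ F w)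
    (hδ0 : 0 ≤ δ) {t : ℝ} (ht : 1 ≤ t) :
    (2 * t - 1) / (2 * t + 1) * F (1 - 1 / (t + 1)) + δ / (4 * J ^ 2) / t ≤ F (1 - 1 / t) := by
  have hJ' : (2 : ℝ) ≤ J := mod_cast hJ
  have hw0 : 0 ≤ 1 - 1 / t := sub_nonneg.2 ((div_le_one (by linarith)).2 ht)
  have hw1 : 1 - 1 / t < 1 := sub_lt_self _ (by positivity)
  have hw : |1 - 1 / t| < 1 := by rwa [abs_of_nonneg hw0]
  have hnear : 1 / (2 * ((1 : ℤ) : ℝ) - (1 - 1 / t)) = 1 - 1 / (t + 1) := by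
    push_cast
    rw [show 2 * 1 - (1 - 1 / t) = (t + 1) / t by field_simp; ring]
    field_simp
    ring
  have hfar : |1 / (2 * ((J : ℤ) : ℝ) - (1 - 1 / t))| ≤ 1 / (J : ℝ) := by
    rw [Int.cast_natCast, abs_of_nonneg (one_div_nonneg.2 (by linarith))]
    exact one_div_le_one_div_of_le (by linarith) (by linarith)
  have hpair := hF.sum_le hw {1, (J : ℤ)} (by simp; lia)
  rw [Finset.sum_pair (by lia), hnear, evenWeight_one_parabolic ht] at hpair
  refine le_trans (add_le_add_right ?_ _) hpair
  calc δ / (4 * J ^ 2) / t = 1 / (4 * J ^ 2) / t * δ := by ring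
    _ ≤ _ := mul_le_mul (div_le_evenWeight_parabolic hJ ht) (hδ _ hfar) hδ0
      (evenWeight_pos hw (by lia)).le

theorem le_of_nonneg {δ : ℝ} {J : ℕ} (hJ : 2 ≤ J) (hδ : ∀ w, |w| ≤ 1 / (J : ℝ) → δ ≤ F w)
    (hδ0 : 0 ≤ δ) {w : ℝ} (hw0 : 0 ≤ w) (hw1 : w < 1) : δ / (4 * J ^ 2) / 2 ≤ F w := by
  have ht : 1 ≤ 1 / (1 - w) := (one_le_div (by linarith)).2 (by linarith)
  have := half_le_of_parabolic_superharmonic (H := fun t => F (1 - 1 / t))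
    (β := δ / (4 * J ^ 2)) (by positivity)
    (fun t ht => hF.nonneg (abs_lt.2 ⟨?_, ?_⟩)) (fun t ht => hF.parabolic_step hJ hδ hδ0 ht) ht
  · simpa only [one_div_one_div, sub_sub_cancel] using this
  · linarith [(div_le_one (by linarith)).2 ht]
  · exact sub_lt_self _ (by positivity)

theorem exists_pos_le {δ r : ℝ} (hδ0 : 0 < δ) (hr : 0 < r) (hδ : ∀ w, |w| ≤ r → δ ≤ F w) :
    ∃ c > 0, ∀ w, |w| < 1 → c ≤ F w := by
  obtain ⟨k, hk⟩ := exists_nat_gt (1 / r)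
  have hkr : 1 / ((k + 2 : ℕ) : ℝ) ≤ r := by
    rw [one_div_le (by positivity) hr]
    push_cast
    linarith
  refine ⟨δ / (4 * ((k + 2 : ℕ) : ℝ) ^ 2) / 2, by positivity, fun w hw => ?_⟩
  obtain ⟨hw1, hw2⟩ := abs_lt.1 hw
  rcases le_total 0 w with h0 | h0
  · exact hF.le_of_nonneg (by lia) (fun v hv => hδ v (hv.trans hkr)) hδ0.le h0 hw2
  · have := hF.comp_neg.le_of_nonneg (w := -w) (by lia)
      (fun v hv => hδ (-v) (((abs_neg v).trans_le hv).trans hkr)) hδ0.le (by linarith) (by linarith)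
    rwa [neg_neg] at this

end IsEvenSuperharmonic

/-- If the supremum `M` of `G` were positive, then `M - G` would be bounded away from `0` near `0`,
hence everywhere by superharmonicity. -/
theorem nonpos_of_forall_isEvenSuperharmonic {G : ℝ → ℝ} {C : ℝ} (hC : ∀ w, |w| < 1 → G w ≤ C * |w|)
    (hG : ∀ M, (∀ w, |w| < 1 → G w ≤ M) → IsEvenSuperharmonic fun w => M - G w) {w : ℝ}
    (hw : |w| < 1) : G w ≤ 0 := by
  by_contra! hpos
  set S := G '' {v | |v| < 1}
  have hC0 : 0 < C := pos_of_mul_pos_left (hpos.trans_le (hC w hw)) (abs_nonneg w)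
  have hbdd : BddAbove S := by
    refine ⟨C, ?_⟩
    rintro - ⟨v, hv : |v| < 1, rfl⟩
    exact (hC v hv).trans (mul_le_of_le_one_right hC0.le hv.le)
  have hle (v : ℝ) (hv : |v| < 1) : G v ≤ sSup S := le_csSup hbdd ⟨v, hv, rfl⟩
  have hsup : 0 < sSup S := hpos.trans_le (hle w hw)
  obtain ⟨c, hc0, hc⟩ := (hG (sSup S) hle).exists_pos_le (half_pos hsup)
    (r := min (1 / 2) (sSup S / 2 / C)) (by positivity) fun v hv => by
      have hv2 : |v| ≤ 1 / 2 := hv.trans (min_le_left _ _)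
      have hvC := (le_div_iff₀' hC0).1 (hv.trans (min_le_right _ _))
      linarith [hC v (by linarith)]
  have hsup' : sSup S ≤ sSup S - c := by
    refine csSup_le ⟨G w, w, hw, rfl⟩ ?_
    rintro - ⟨v, hv, rfl⟩
    linarith [hc v hv]
  linarith

theorem isEvenSuperharmonic_sub_evenGap {M : ℝ} (hM : ∀ w, |w| < 1 → evenGap w ≤ M) :
    IsEvenSuperharmonic fun w => M - evenGap w where
  nonneg w hw := sub_nonneg.2 (hM w hw)
  sum_le w hw t ht := by
    have hweight (j : {j : ℤ // j ≠ 0}) := (evenWeight_pos hw j.2).le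
    have hbranch (j : {j : ℤ // j ≠ 0}) := hM _ (abs_one_div_two_mul_sub_lt_one hw j.2)
    have hone := (hasSum_evenWeight hw).mul_right M
    have hgap : Summable fun j : {j : ℤ // j ≠ 0} =>
        evenWeight j w * evenGap (1 / (2 * ((j : ℤ) : ℝ) - w)) :=
      hone.summable.of_nonneg_of_le (fun j => mul_nonneg (hweight j) (evenGap_nonneg _))
        fun j => mul_le_mul_of_nonneg_left (hbranch j) (hweight j)
    have hdiff := hone.sub hgap.hasSum
    simp only [← mul_sub] at hdiff
    calc ∑ j ∈ t, evenWeight j w * (M - evenGap (1 / (2 * j - w)))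
        = ∑ j ∈ t.subtype (· ≠ 0), evenWeight j w * (M - evenGap (1 / (2 * ((j : ℤ) : ℝ) - w))) :=
          (Finset.sum_subtype_of_mem (fun j : ℤ => evenWeight j w * _)
            fun j hj => ne_of_mem_of_not_mem hj ht).symm
      _ ≤ 1 * M - _ := sum_le_hasSum _
          (fun j _ => mul_nonneg (hweight j) (sub_nonneg.2 (hbranch j))) hdiff
      _ ≤ M - evenGap w := by
          rw [one_mul]
          exact sub_le_sub_left (evenGap_le_of_hasSum hw hgap.hasSum) M

theorem evenGap_eq_zero {w : ℝ} (hw : |w| < 1) : evenGap w = 0 :=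
  le_antisymm (nonpos_of_forall_isEvenSuperharmonic (fun _ => evenGap_le)
    (fun _ => isEvenSuperharmonic_sub_evenGap) hw) (evenGap_nonneg w)

theorem evenSystem.asymptoticSeminorm_eq_zero {z : Lp ℝ 1 evenSystem.μ} (hz : ‖z⁺‖ = ‖z⁻‖) :
    asymptoticSeminorm evenSystem.isMarkovOperator_transferL1.opNorm_le_one z = 0 := by
  refine evenSystem.isMarkovOperator_transferL1.asymptoticSeminorm_eq_zero_of_norm_smul
    evenSystem.isAbsorbing (p := evenKernel 0) (fun g hg => ?_) hz
  refine seminorm_sub_norm_smul_eq_zero_of_mem_hull _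
    (fun g => evenSystem.nonneg_of_mem_mobiusKernels) (fun g hg => ?_) hg
  obtain ⟨r, hr, w, hw, rfl⟩ := exists_eq_smul_evenKernel hg
  rw [norm_smul_of_nonneg hr, norm_evenKernel hw, mul_one, ← smul_sub, map_smul_eq_mul,
    ← evenGap, evenGap_eq_zero hw, mul_zero]

theorem T1op_eq_transfer : T1op = evenSystem.transfer := by
  ext f x
  exact tsum_congr fun j => (Complex.real_smul ..).symm

theorem S1op_eq_transfer : S1op = gaussSystem.transfer := by
  ext f x
  exact tsum_congr fun j => (Complex.real_smul ..).symm

/-- Contractivity of `T₁` on `L¹(-1,1)` and exactness: the iterates of `T₁`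
resp. `S₁` of a mean-zero `L¹` function tend to `0` in `L¹`. -/
theorem stmt_19 :
    (∀ f : ℝ → ℂ, IntegrableOn f (Set.Ioo (-1 : ℝ) 1) →
      (∀ᵐ x ∂(volume.restrict (Set.Ioo (-1 : ℝ) 1)),
        Summable fun j : {j : ℤ // j ≠ 0} =>
          ‖((1 / (2 * ((j : ℤ) : ℝ) + x) ^ 2 : ℝ) : ℂ) *
            f (-1 / (2 * ((j : ℤ) : ℝ) + x))‖) ∧
      IntegrableOn (T1op f) (Set.Ioo (-1 : ℝ) 1) ∧
      (∫ x in Set.Ioo (-1 : ℝ) 1, ‖T1op f x‖) ≤ (∫ x in Set.Ioo (-1 : ℝ) 1, ‖f x‖) ∧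
      ((∫ x in Set.Ioo (-1 : ℝ) 1, f x) = 0 →
        Tendsto (fun n : ℕ => ∫ x in Set.Ioo (-1 : ℝ) 1, ‖T1op^[n] f x‖)
          atTop (nhds 0))) ∧
    (∀ f : ℝ → ℂ, IntegrableOn f (Set.Ioo (0 : ℝ) 1) →
      (∫ x in Set.Ioo (0 : ℝ) 1, f x) = 0 →
      Tendsto (fun n : ℕ => ∫ x in Set.Ioo (0 : ℝ) 1, ‖S1op^[n] f x‖)
        atTop (nhds 0)) := by
  rw [T1op_eq_transfer, S1op_eq_transfer]
  refine ⟨fun f hf => ⟨?_, evenSystem.integrable_transfer hf,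
    evenSystem.integral_norm_transfer_le hf, evenSystem.tendsto_integral_norm_iterate_transfer
      (fun _ => evenSystem.asymptoticSeminorm_eq_zero) hf⟩,
    fun f => gaussSystem.tendsto_integral_norm_iterate_transfer
      fun _ => gaussSystem.asymptoticSeminorm_eq_zero⟩
  filter_upwards [evenSystem.ae_summable_norm_transferTerm hf] with x hx
  exact hx.congr fun j => congrArg _ (Complex.real_smul ..)
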